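/- arXiv:2401.14317 — 3 statements merged into one kernel-verified Lean document; each statement's English description precedes it below -/
import Mathlib

section
/- Let d ≥ 2 and ε ∈ (0,1). Let [k] index parts P_1, …, P_k of a partition of a finite ground set, with vectors v_{ij} ∈ ℝ^d for i ∈ [k], j ∈ P_i, and let x be nonnegative weights with Σ_{j∈P_i} x_{ij} = 1 for each i ∈ [k]. Suppose X = Σ_{i∈[k]} Σ_{j∈P_i} x_{ij}·v_{ij}v_{ij}ᵀ is positive definite and that for every pair (i,j) with 0 < x_{ij} < 1 one has v_{ij}ᵀ X⁻¹ v_{ij} ≤ ε²/(10·ln(d)). Then there exists a choice function σ with σ(i) ∈ P_i for every i such that Σ_{i=1}^k v_{iσ(i)}v_{iσ(i)}ᵀ ⪰ (1−ε)·X, and in particular λ_min(Σ_{i=1}^k v_{iσ(i)}v_{iσ(i)}ᵀ) ≥ (1−ε)·λ_min(X). -/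
open Matrix

/-- The smallest eigenvalue of a real symmetric matrix, characterized via the Loewner order. -/
noncomputable def lambdaMin {d : ℕ} (A : Matrix (Fin d) (Fin d) ℝ) : ℝ :=
  sSup {c : ℝ | (A - c • (1 : Matrix (Fin d) (Fin d) ℝ)).PosSemidef}

/-!
Whitening by `X ^ (1/2)` reduces the theorem to `X = 1`. Instead of `tr exp (-η ∑ Z)`, which would
call for Golden–Thompson and Lieb, use the polynomial potential `tr (1 - s ∑ Z) ^ N` with
`s * N = η` and `N` large. Start with the means `(1 - ε/2) ∑ⱼ xᵢⱼ wᵢⱼwᵢⱼᵀ` in every part and replace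
them by single vectors, one part at a time, without increasing the potential.

For a part with base matrix `K`, tangent-line inequalities for `tr K ^ N` bound the potential of
the mean below by its linearization at `K`, and the potential of a single choice above by its
linearization at the downdated matrix `K - s wwᵀ`. The two slopes are `wᵀ K ^ m w` and
`wᵀ (K - s wwᵀ) ^ m w` with `m = N - 1`, and shortness of `w` makes them agree up to the factor
`1 - ε/2`: telescoping the difference of powers leaves products of moments of `K`, which Chebyshev's
inequality merges. A part with `xᵢⱼ = 1` needs no shortness, since passing from `(1 - ε/2) wwᵀ` to
`wwᵀ` only decreases the potential. At the end the largest eigenvalue of `1 - s ∑ wwᵀ` is at most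
the `N`-th root of the potential, and `η ε / 2 ≥ log d` absorbs the dimension factor.
-/

theorem sum_mul_sum_le_of_monovary {ι : Type*} [Fintype ι] {p f g : ι → ℝ} (hp : 0 ≤ p)
    (hfg : Monovary f g) :
    (∑ i, p i * f i) * ∑ i, p i * g i ≤ (∑ i, p i) * ∑ i, p i * (f i * g i) := by
  have symmetrized : ∑ i, ∑ j, p i * p j * ((f j - f i) * (g j - g i)) =
      2 * ((∑ i, p i) * ∑ i, p i * (f i * g i) - (∑ i, p i * f i) * ∑ i, p i * g i) := by
    have expand : ∀ i j, p i * p j * ((f j - f i) * (g j - g i)) =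
        p i * (p j * (f j * g j)) + p i * (f i * g i) * p j -
          (p i * f i * (p j * g j) + p i * g i * (p j * f j)) := fun i j => by ring
    simp only [expand, Finset.sum_sub_distrib, Finset.sum_add_distrib, ← Finset.sum_mul_sum]
    ring
  have : 0 ≤ ∑ i, ∑ j, p i * p j * ((f j - f i) * (g j - g i)) :=
    Finset.sum_nonneg fun i _ => Finset.sum_nonneg fun j _ =>
      mul_nonneg (mul_nonneg (hp i) (hp j)) (hfg.sub_mul_sub_nonneg i j)
  linarith

theorem exists_pos_and_le_sum_mul {ι : Type*} [Fintype ι] {x : ι → ℝ} (hx0 : ∀ j, 0 ≤ x j)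
    (hx1 : ∑ j, x j = 1) (f : ι → ℝ) : ∃ j, 0 < x j ∧ f j ≤ ∑ i, x i * f i := by
  by_contra! h
  obtain ⟨j, -, hj⟩ := Finset.exists_ne_zero_of_sum_ne_zero (hx1.trans_ne one_ne_zero)
  have hlt : ∑ i, x i * ∑ l, x l * f l < ∑ i, x i * f i := by
    refine Finset.sum_lt_sum (fun i _ => ?_) ⟨j, Finset.mem_univ j, ?_⟩
    · rcases (hx0 i).eq_or_lt with hi | hi
      · simp [← hi]
      · exact mul_le_mul_of_nonneg_left (h i hi).le hi.le
    · have hj' : 0 < x j := (hx0 j).lt_of_ne' hj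
      exact mul_lt_mul_of_pos_left (h j hj') hj'
  rw [← Finset.sum_mul, hx1, one_mul] at hlt
  exact lt_irrefl _ hlt

theorem sum_smul_eq_of_eq_one {ι E : Type*} [Fintype ι] [AddCommMonoid E] [Module ℝ E]
    {x : ι → ℝ} (hx0 : ∀ j, 0 ≤ x j) (hx1 : ∑ j, x j = 1) {j : ι} (hj : x j = 1) (y : ι → E) :
    ∑ i, x i • y i = y j := by
  classical
  have hrest : ∑ i ∈ Finset.univ.erase j, x i = 0 := by
    rw [Finset.sum_erase_eq_sub (Finset.mem_univ j), hx1, hj, sub_self]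
  rw [Finset.sum_eq_single j (fun i _ hi => ?_) (by simp), hj, one_smul]
  rw [(Finset.sum_eq_zero_iff_of_nonneg fun i _ => hx0 i).1 hrest i (by simp [hi]), zero_smul]

theorem pow_add_mul_sub_le_pow {a b : ℝ} (ha : 0 ≤ a) (hb : 0 ≤ b) (m : ℕ) :
    b ^ (m + 1) + (m + 1) * b ^ m * (a - b) ≤ a ^ (m + 1) := by
  simpa using pow_add_mul_le_add_pow (b := a - b) hb (by linarith) (m + 1)

theorem pow_eq_pow_add_sum_pow_mul_sub_mul_pow {R : Type*} [Ring R] (a b : R) (m : ℕ) :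
    a ^ m = b ^ m + ∑ j ∈ Finset.range m, b ^ j * (a - b) * a ^ (m - 1 - j) := by
  have telescope := Finset.sum_range_sub' (fun j => b ^ j * a ^ (m - j)) m
  have term : ∀ j ∈ Finset.range m, b ^ j * a ^ (m - j) - b ^ (j + 1) * a ^ (m - (j + 1)) =
      b ^ j * (a - b) * a ^ (m - 1 - j) := fun j hj => by
    rw [Finset.mem_range] at hj
    rw [show m - j = m - 1 - j + 1 by omega, show m - (j + 1) = m - 1 - j by omega, pow_succ b,
      pow_succ' a]
    noncomm_ring
  rw [← Finset.sum_congr rfl term, telescope]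
  simp

theorem mul_one_sub_pow_le_one_sub_pow {d s ε : ℝ} (hs0 : 0 ≤ s) (hs1 : s ≤ 1) (hε0 : 0 ≤ ε)
    (hε1 : ε ≤ 1) {N : ℕ} (hd : Real.log d ≤ N * s * (ε / 2)) :
    d * (1 - s * (1 - ε / 2)) ^ N ≤ (1 - s * (1 - ε)) ^ N := by
  have hb : 0 ≤ 1 - s * (1 - ε) := by nlinarith
  have hsc : 0 ≤ 1 - s * (1 - ε / 2) := by nlinarith
  have factor : 1 - s * (1 - ε / 2) ≤ (1 - s * (1 - ε)) * Real.exp (-(s * (ε / 2))) := by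
    refine le_trans ?_ (mul_le_mul_of_nonneg_left (Real.one_sub_le_exp_neg _) hb)
    nlinarith [mul_nonneg (mul_nonneg hs0 hs0) (mul_nonneg hε0 (sub_nonneg.2 hε1))]
  calc d * (1 - s * (1 - ε / 2)) ^ N
      ≤ Real.exp (N * s * (ε / 2)) *
          ((1 - s * (1 - ε)) * Real.exp (-(s * (ε / 2)))) ^ N := by
        gcongr
        exact (Real.le_exp_log d).trans (Real.exp_le_exp.2 hd)
    _ = (1 - s * (1 - ε)) ^ N := by
        rw [mul_pow, ← Real.exp_nat_mul, mul_left_comm, ← Real.exp_add]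
        ring_nf
        simp

theorem exists_div_natCast_add_one_le (η B : ℝ) {u : ℝ} (hu : 0 < u) :
    ∃ m : ℕ, η / (m + 1) ≤ u ∧ η / (m + 1) * B ≤ u := by
  have hη : Filter.Tendsto (fun m : ℕ => η / (m + 1)) Filter.atTop (nhds 0) := by
    exact_mod_cast (tendsto_const_div_atTop_nhds_zero_nat η).comp (Filter.tendsto_add_atTop_nat 1)
  have hηB := hη.mul_const B
  rw [zero_mul] at hηB
  exact ((hη.eventually_le_const hu).and (hηB.eventually_le_const hu)).exists

-- `L` plays the role of `log d`; `η` is the inverse temperature and `t` the lower bound to be kept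
-- on `1 - s ∑ Z`.
theorem exists_inverse_temperature {δ ε L : ℝ} (hε : 0 < ε) (hL : 0 ≤ L)
    (h : 4 * δ * L < ε ^ 2) :
    ∃ η t : ℝ, 0 < η ∧ L ≤ η * (ε / 2) ∧ 0 < t ∧ t < 1 ∧ η * δ ≤ ε / 2 * t := by
  have hcont : Filter.Tendsto (fun L' => 4 * δ * L') (nhdsWithin L (Set.Ioi L))
      (nhds (4 * δ * L)) := ((continuous_const_mul (4 * δ)).tendsto L).mono_left inf_le_left
  obtain ⟨L', hL', hLL'⟩ := ((hcont.eventually_lt_const h).and self_mem_nhdsWithin).exists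
  obtain ⟨t, hlt, ht1⟩ := exists_between (a₁ := max 0 (4 * δ * L' / ε ^ 2)) (a₂ := 1) <|
    max_lt one_pos ((div_lt_one (by positivity)).2 hL')
  rw [max_lt_iff, div_lt_iff₀ (by positivity)] at hlt
  refine ⟨2 * L' / ε, t, div_pos (mul_pos two_pos (hL.trans_lt hLL')) hε, ?_, hlt.1, ht1, ?_⟩
  · field_simp
    exact le_of_lt hLL'
  · rw [div_mul_eq_mul_div, div_le_iff₀ hε]
    linarith [hlt.2]

theorem exists_choice_le_of_forall_exists_update_le {κ E : Type*} {P : κ → Type*} [Finite κ]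
    [DecidableEq κ] {Φ : (κ → E) → ℝ} {C : κ → Set E} {M : κ → E} {y : (i : κ) → P i → E}
    (hM : ∀ i, M i ∈ C i) (hy : ∀ i j, y i j ∈ C i)
    (h : ∀ Z : κ → E, (∀ i, Z i ∈ C i) → ∀ a, Z a = M a →
      ∃ j, Φ (Function.update Z a (y a j)) ≤ Φ Z) :
    ∃ σ : (i : κ) → P i, Φ (fun i => y i (σ i)) ≤ Φ M := by
  suffices partialChoice : ∀ S : Finset κ, ∃ Z : κ → E, (∀ i, Z i ∈ C i) ∧
      (∀ i ∈ S, ∃ j, y i j = Z i) ∧ (∀ i ∉ S, Z i = M i) ∧ Φ Z ≤ Φ M by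
    cases nonempty_fintype κ
    obtain ⟨Z, -, hZ, -, hle⟩ := partialChoice Finset.univ
    choose σ hσ using fun i => hZ i (Finset.mem_univ i)
    exact ⟨σ, by simpa only [hσ] using hle⟩
  intro S
  induction S using Finset.induction_on with
  | empty => exact ⟨M, hM, by simp, fun _ _ => rfl, le_rfl⟩
  | insert a S ha ih =>
    obtain ⟨Z, hC, hZS, hZM, hle⟩ := ih
    obtain ⟨j, hj⟩ := h Z hC a (hZM a ha)
    refine ⟨Function.update Z a (y a j), fun i => ?_, fun i hi => ?_, fun i hi => ?_, hj.trans hle⟩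
    · rcases eq_or_ne i a with rfl | hia
      · simpa using hy i j
      · simpa [hia] using hC i
    · rcases eq_or_ne i a with rfl | hia
      · exact ⟨j, by simp⟩
      · simpa [hia] using hZS i (Finset.mem_of_mem_insert_of_ne hi hia)
    · rw [Finset.mem_insert, not_or] at hi
      simpa [hi.1] using hZM i hi.2

section
open scoped MatrixOrder

theorem vecMulVec_self_nonneg {n : Type*} [Finite n] (w : n → ℝ) : 0 ≤ vecMulVec w w := by
  simpa using (posSemidef_vecMulVec_self_star w).nonneg

theorem vecMulVec_mul_mul_vecMulVec {n : Type*} [Fintype n] (u v : n → ℝ) (B : Matrix n n ℝ) :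
    vecMulVec u v * B * vecMulVec u v = (B * vecMulVec u v).trace • vecMulVec u v := by
  rw [vecMulVec_mul, vecMulVec_mul_vecMulVec, mul_vecMulVec, trace_vecMulVec,
    dotProduct_comm (B *ᵥ u), dotProduct_mulVec, vecMulVec_smul]

theorem smul_one_le_one_sub_smul_sum {n κ : Type*} [Finite n] [DecidableEq n] [Fintype κ]
    {Z : κ → Matrix n n ℝ} {r s t : ℝ} (hs : 0 ≤ s)
    (hsr : s * (Fintype.card κ * r) ≤ 1 - t) (hZ : ∀ i, Z i ≤ r • 1) :
    t • 1 ≤ 1 - s • ∑ i, Z i := by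
  cases nonempty_fintype n
  calc t • (1 : Matrix n n ℝ)
      ≤ (1 - s * (Fintype.card κ * r)) • 1 :=
        smul_le_smul_of_nonneg_right (by linarith) zero_le_one
    _ = 1 - s • ∑ _i : κ, r • 1 := by
        rw [Finset.sum_const, Finset.card_univ, ← Nat.cast_smul_eq_nsmul ℝ]
        module
    _ ≤ 1 - s • ∑ i, Z i := by
        gcongr with i
        exact hZ i

variable {n : Type*} [Fintype n] [DecidableEq n] {A B K : Matrix n n ℝ}

theorem exists_weights_trace_pow_mul_pow (hA : A.IsHermitian) (hB : B.IsHermitian) :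
    ∃ W : n → n → ℝ, (∀ i j, 0 ≤ W i j) ∧ ∀ p q : ℕ,
      (A ^ p * B ^ q).trace = ∑ i, ∑ j, W i j * (hA.eigenvalues i ^ p * hB.eigenvalues j ^ q) := by
  have diagonalize {C : Matrix n n ℝ} (hC : C.IsHermitian) (p : ℕ) :
      C ^ p = hC.eigenvectorUnitary.1 * diagonal (hC.eigenvalues ^ p) *
        hC.eigenvectorUnitary.1ᵀ := by
    conv_lhs => rw [hC.spectral_theorem, ← map_pow, Unitary.conjStarAlgAut_apply, diagonal_pow]
    rw [star_eq_conjTranspose, conjTranspose_eq_transpose_of_trivial]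
    rfl
  refine ⟨fun i j => (hA.eigenvectorUnitary.1ᵀ * hB.eigenvectorUnitary.1) i j ^ 2,
    fun i j => sq_nonneg _, fun p q => ?_⟩
  rw [diagonalize hA, diagonalize hB]
  generalize hA.eigenvectorUnitary.1 = U, hB.eigenvectorUnitary.1 = V
  calc (U * diagonal (hA.eigenvalues ^ p) * Uᵀ * (V * diagonal (hB.eigenvalues ^ q) * Vᵀ)).trace
      = (diagonal (hA.eigenvalues ^ p) * (Uᵀ * V) *
          (diagonal (hB.eigenvalues ^ q) * (Uᵀ * V)ᵀ)).trace := by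
        rw [transpose_mul, transpose_transpose, Matrix.mul_assoc, Matrix.mul_assoc U,
          trace_mul_comm U]
        simp only [Matrix.mul_assoc]
    _ = ∑ i, ∑ j, (Uᵀ * V) i j ^ 2 * (hA.eigenvalues i ^ p * hB.eigenvalues j ^ q) := by
        generalize Uᵀ * V = W
        refine Finset.sum_congr rfl fun i _ => ?_
        rw [diag_apply, Matrix.mul_apply]
        refine Finset.sum_congr rfl fun j _ => ?_
        rw [diagonal_mul, diagonal_mul, transpose_apply, Pi.pow_apply, Pi.pow_apply]
        ring

theorem exists_weights_trace_pow_mul (hA : A.IsHermitian) (hB : 0 ≤ B) :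
    ∃ p : n → ℝ, 0 ≤ p ∧ ∀ m : ℕ, (A ^ m * B).trace = ∑ i, p i * hA.eigenvalues i ^ m := by
  obtain ⟨W, hW, htrace⟩ := exists_weights_trace_pow_mul_pow hA hB.posSemidef.isHermitian
  refine ⟨fun i => ∑ j, W i j * hB.posSemidef.isHermitian.eigenvalues j, fun i =>
    Finset.sum_nonneg fun j _ => mul_nonneg (hW i j) (hB.posSemidef.eigenvalues_nonneg j),
    fun m => ?_⟩
  conv_lhs => rw [← pow_one B, htrace]
  refine Finset.sum_congr rfl fun i _ => ?_
  rw [Finset.sum_mul]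
  exact Finset.sum_congr rfl fun j _ => by ring

theorem trace_pow_mul_nonneg (hA : 0 ≤ A) (hB : 0 ≤ B) (m : ℕ) : 0 ≤ (A ^ m * B).trace := by
  obtain ⟨p, hp, htrace⟩ := exists_weights_trace_pow_mul hA.posSemidef.isHermitian hB
  rw [htrace]
  exact Finset.sum_nonneg fun i _ =>
    mul_nonneg (hp i) (pow_nonneg (hA.posSemidef.eigenvalues_nonneg i) m)

theorem trace_pow_mul_mul_trace_pow_mul_le (hA : 0 ≤ A) (hB : 0 ≤ B) (a b : ℕ) :
    (A ^ a * B).trace * (A ^ b * B).trace ≤ B.trace * (A ^ (a + b) * B).trace := by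
  obtain ⟨p, hp, htrace⟩ := exists_weights_trace_pow_mul hA.posSemidef.isHermitian hB
  have hl : 0 ≤ hA.posSemidef.isHermitian.eigenvalues := hA.posSemidef.eigenvalues_nonneg
  have hB0 : B.trace = ∑ i, p i := by simpa using htrace 0
  rw [hB0, htrace, htrace, htrace]
  simpa only [Pi.pow_apply, ← pow_add] using
    sum_mul_sum_le_of_monovary hp (((monovary_self _).pow_left₀ hl a).pow_right₀ hl b)

theorem mul_trace_pow_mul_le {t : ℝ} (hA : 0 ≤ A) (ht : t • 1 ≤ A) (hB : 0 ≤ B) (m : ℕ) :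
    t * (A ^ m * B).trace ≤ (A ^ (m + 1) * B).trace := by
  obtain ⟨p, hp, htrace⟩ := exists_weights_trace_pow_mul hA.posSemidef.isHermitian hB
  have hl := hA.posSemidef.eigenvalues_nonneg
  have htl (i : n) : t ≤ hA.posSemidef.isHermitian.eigenvalues i := by
    rw [← Algebra.algebraMap_eq_smul_one, algebraMap_le_iff_le_spectrum] at ht
    exact ht _ (hA.posSemidef.isHermitian.eigenvalues_mem_spectrum_real i)
  rw [htrace, htrace, Finset.mul_sum]
  refine Finset.sum_le_sum fun i _ => ?_
  rw [pow_succ', mul_left_comm]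
  have := pow_nonneg (hl i) m
  gcongr
  exacts [hp i, htl i]

theorem trace_pow_add_mul_trace_mul_sub_le (hA : 0 ≤ A) (hB : 0 ≤ B) (m : ℕ) :
    (B ^ (m + 1)).trace + (m + 1) * (B ^ m * (A - B)).trace ≤ (A ^ (m + 1)).trace := by
  obtain ⟨W, hW, htrace⟩ := exists_weights_trace_pow_mul_pow hA.posSemidef.isHermitian
    hB.posSemidef.isHermitian
  have hAA := htrace (m + 1) 0
  have hBB := htrace 0 (m + 1)
  have hAB := htrace 1 m
  simp only [pow_zero, pow_one, mul_one, one_mul] at hAA hBB hAB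
  rw [Matrix.mul_sub, trace_sub, trace_mul_comm, ← pow_succ, hAA, hBB, hAB]
  simp only [← Finset.sum_sub_distrib, Finset.mul_sum, ← Finset.sum_add_distrib]
  refine Finset.sum_le_sum fun i _ => Finset.sum_le_sum fun j _ => ?_
  have := mul_le_mul_of_nonneg_left (pow_add_mul_sub_le_pow (hA.posSemidef.eigenvalues_nonneg i)
    (hB.posSemidef.eigenvalues_nonneg j) m) (hW i j)
  refine le_of_eq_of_le ?_ this
  ring

theorem trace_pow_le_trace_pow (hA : 0 ≤ A) (hAB : A ≤ B) (m : ℕ) :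
    (A ^ (m + 1)).trace ≤ (B ^ (m + 1)).trace := by
  have tangent := trace_pow_add_mul_trace_mul_sub_le (hA.trans hAB) hA m
  have := trace_pow_mul_nonneg hA (sub_nonneg.2 hAB) m
  nlinarith

theorem le_trace_of_mem_spectrum (hA : 0 ≤ A) {z : ℝ} (hz : z ∈ spectrum ℝ A) : z ≤ A.trace := by
  rw [hA.posSemidef.isHermitian.spectrum_real_eq_range_eigenvalues] at hz
  obtain ⟨i, rfl⟩ := hz
  rw [hA.posSemidef.isHermitian.trace_eq_sum_eigenvalues]
  exact Finset.single_le_sum (fun i _ => hA.posSemidef.eigenvalues_nonneg i) (Finset.mem_univ i)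

theorem le_smul_one_of_trace_pow_le (hA : 0 ≤ A) {b : ℝ} (hb : 0 ≤ b) {m : ℕ} (hm : m ≠ 0)
    (h : (A ^ m).trace ≤ b ^ m) : A ≤ b • 1 := by
  rw [← Algebra.algebraMap_eq_smul_one]
  exact le_algebraMap_of_spectrum_le fun z hz => le_of_pow_le_pow_left₀ hm hb <|
    (le_trace_of_mem_spectrum (hA.posSemidef.pow m).nonneg (spectrum.pow_mem_pow A m hz)).trans h

theorem vecMulVec_self_le_smul_one {w : n → ℝ} {r : ℝ} (hw : w ⬝ᵥ w ≤ r) :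
    vecMulVec w w ≤ r • 1 := by
  refine le_smul_one_of_trace_pow_le (m := 1) (vecMulVec_self_nonneg w) ?_ one_ne_zero ?_
  · exact (by simpa using dotProduct_self_star_nonneg w : 0 ≤ w ⬝ᵥ w).trans hw
  · simpa [trace_vecMulVec] using hw

theorem trace_pow_mul_vecMulVec_eq_add_sum (K : Matrix n n ℝ) (w : n → ℝ) (s : ℝ) (m : ℕ) :
    (K ^ m * vecMulVec w w).trace = ((K - s • vecMulVec w w) ^ m * vecMulVec w w).trace +
      s * ∑ j ∈ Finset.range m, ((K - s • vecMulVec w w) ^ j * vecMulVec w w).trace *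
        (K ^ (m - 1 - j) * vecMulVec w w).trace := by
  conv_lhs => rw [pow_eq_pow_add_sum_pow_mul_sub_mul_pow K (K - s • vecMulVec w w) m]
  rw [Matrix.add_mul, trace_add, Finset.sum_mul, trace_sum, Finset.mul_sum]
  congr 1
  refine Finset.sum_congr rfl fun j _ => ?_
  rw [sub_sub_cancel, mul_smul_comm, smul_mul_assoc, smul_mul_assoc, trace_smul, Matrix.mul_assoc,
    Matrix.mul_assoc, ← Matrix.mul_assoc (vecMulVec w w), vecMulVec_mul_mul_vecMulVec,
    mul_smul_comm, trace_smul, smul_eq_mul, smul_eq_mul, mul_comm (trace _) (trace _)]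

theorem trace_pow_sub_smul_mul_vecMulVec_le {w : n → ℝ} {s : ℝ} (hs : 0 ≤ s)
    (hK' : 0 ≤ K - s • vecMulVec w w) (m : ℕ) :
    ((K - s • vecMulVec w w) ^ m * vecMulVec w w).trace ≤ (K ^ m * vecMulVec w w).trace := by
  have hP := vecMulVec_self_nonneg w
  have hK : 0 ≤ K := by simpa using add_nonneg hK' (smul_nonneg hs hP)
  rw [trace_pow_mul_vecMulVec_eq_add_sum K w s]
  exact le_add_of_nonneg_right <| mul_nonneg hs <| Finset.sum_nonneg fun j _ =>
    mul_nonneg (trace_pow_mul_nonneg hK' hP j) (trace_pow_mul_nonneg hK hP _)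

theorem mul_trace_pow_mul_vecMulVec_sub_le {w : n → ℝ} {s t : ℝ} (hs : 0 ≤ s)
    (hKt : t • 1 ≤ K) (hK' : 0 ≤ K - s • vecMulVec w w) (m : ℕ) :
    t * ((K ^ m * vecMulVec w w).trace - ((K - s • vecMulVec w w) ^ m * vecMulVec w w).trace) ≤
      m * s * (w ⬝ᵥ w) * (K ^ m * vecMulVec w w).trace := by
  have hP := vecMulVec_self_nonneg w
  have hK : 0 ≤ K := by simpa using add_nonneg hK' (smul_nonneg hs hP)
  have moment_product (j : ℕ) (hj : j ∈ Finset.range m) :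
      t * (((K - s • vecMulVec w w) ^ j * vecMulVec w w).trace *
        (K ^ (m - 1 - j) * vecMulVec w w).trace) ≤
      (w ⬝ᵥ w) * (K ^ m * vecMulVec w w).trace := by
    rw [Finset.mem_range] at hj
    calc t * (((K - s • vecMulVec w w) ^ j * vecMulVec w w).trace *
          (K ^ (m - 1 - j) * vecMulVec w w).trace)
        = ((K - s • vecMulVec w w) ^ j * vecMulVec w w).trace *
          (t * (K ^ (m - 1 - j) * vecMulVec w w).trace) := by ring
      _ ≤ (K ^ j * vecMulVec w w).trace * (K ^ (m - 1 - j + 1) * vecMulVec w w).trace :=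
        mul_le_mul_of_nonneg (trace_pow_sub_smul_mul_vecMulVec_le hs hK' j)
          (mul_trace_pow_mul_le hK hKt hP _) (trace_pow_mul_nonneg hK' hP j)
          (trace_pow_mul_nonneg hK hP _)
      _ ≤ (vecMulVec w w).trace * (K ^ (j + (m - 1 - j + 1)) * vecMulVec w w).trace :=
        trace_pow_mul_mul_trace_pow_mul_le hK hP _ _
      _ = (w ⬝ᵥ w) * (K ^ m * vecMulVec w w).trace := by
        rw [trace_vecMulVec, show j + (m - 1 - j + 1) = m by omega]
  calc _ = s * ∑ j ∈ Finset.range m, t * (((K - s • vecMulVec w w) ^ j * vecMulVec w w).trace *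
          (K ^ (m - 1 - j) * vecMulVec w w).trace) := by
        conv_lhs => rw [trace_pow_mul_vecMulVec_eq_add_sum K w s]
        rw [← Finset.mul_sum]
        ring
    _ ≤ s * (m • ((w ⬝ᵥ w) * (K ^ m * vecMulVec w w).trace)) := by
        gcongr
        simpa using Finset.sum_le_card_nsmul _ _ _ moment_product
    _ = _ := by
        rw [nsmul_eq_mul]
        ring

theorem trace_sub_smul_vecMulVec_pow_le {w : n → ℝ} {s t c : ℝ} (hs : 0 ≤ s) (ht : 0 < t)
    (hKt : t • 1 ≤ K) (hK' : 0 ≤ K - s • vecMulVec w w) {m : ℕ}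
    (hw : m * s * (w ⬝ᵥ w) ≤ (1 - c) * t) :
    ((K - s • vecMulVec w w) ^ (m + 1)).trace ≤
      (K ^ (m + 1)).trace - (m + 1) * (s * (c * (K ^ m * vecMulVec w w).trace)) := by
  have hP := vecMulVec_self_nonneg w
  have hK : 0 ≤ K := by simpa using add_nonneg hK' (smul_nonneg hs hP)
  have tangent := trace_pow_add_mul_trace_mul_sub_le hK hK' m
  rw [sub_sub_cancel, mul_smul_comm, trace_smul, smul_eq_mul] at tangent
  have moment : c * (K ^ m * vecMulVec w w).trace ≤
      ((K - s • vecMulVec w w) ^ m * vecMulVec w w).trace := by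
    refine le_of_mul_le_mul_left ?_ ht
    linarith [mul_trace_pow_mul_vecMulVec_sub_le hs hKt hK' m,
      mul_le_mul_of_nonneg_right hw (trace_pow_mul_nonneg hK hP m)]
  have : (m + 1) * (s * (c * (K ^ m * vecMulVec w w).trace)) ≤
      (m + 1) * (s * ((K - s • vecMulVec w w) ^ m * vecMulVec w w).trace) := by gcongr
  linarith

theorem exists_trace_sub_smul_vecMulVec_pow_le {ι : Type*} [Fintype ι] {w : ι → n → ℝ}
    {x : ι → ℝ} (hx0 : ∀ j, 0 ≤ x j) (hx1 : ∑ j, x j = 1) {s t c : ℝ} (hs : 0 ≤ s)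
    (ht : 0 < t) (hc : c ≤ 1) (hKt : t • 1 ≤ K) (hKw : ∀ j, 0 ≤ K - s • vecMulVec (w j) (w j))
    (hKM : 0 ≤ K - s • c • ∑ j, x j • vecMulVec (w j) (w j)) {m : ℕ}
    (hfrac : ∀ j, 0 < x j → x j < 1 → m * s * (w j ⬝ᵥ w j) ≤ (1 - c) * t) :
    ∃ j, ((K - s • vecMulVec (w j) (w j)) ^ (m + 1)).trace ≤
      ((K - s • c • ∑ j, x j • vecMulVec (w j) (w j)) ^ (m + 1)).trace := by
  have hK : 0 ≤ K := (smul_nonneg ht.le zero_le_one).trans hKt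
  obtain ⟨j, hj0, hj⟩ := exists_pos_and_le_sum_mul hx0 hx1 fun j =>
    (K ^ (m + 1)).trace - (m + 1) * (s * (c * (K ^ m * vecMulVec (w j) (w j)).trace))
  have hj1 : x j ≤ 1 := hx1 ▸ Finset.single_le_sum (fun i _ => hx0 i) (Finset.mem_univ j)
  refine ⟨j, ?_⟩
  rcases hj1.lt_or_eq with fractional | deterministic
  · calc ((K - s • vecMulVec (w j) (w j)) ^ (m + 1)).trace
        ≤ (K ^ (m + 1)).trace - (m + 1) * (s * (c * (K ^ m * vecMulVec (w j) (w j)).trace)) :=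
          trace_sub_smul_vecMulVec_pow_le hs ht hKt (hKw j) (hfrac j hj0 fractional)
      _ ≤ _ := hj
      _ = (K ^ (m + 1)).trace + (m + 1) *
            (K ^ m * (K - s • c • ∑ j, x j • vecMulVec (w j) (w j) - K)).trace := by
          simp only [mul_sub, Finset.sum_sub_distrib, ← Finset.sum_mul, hx1, one_mul,
            sub_sub_cancel_left, trace_neg, mul_smul_comm, trace_smul,
            Finset.mul_sum, trace_sum, smul_eq_mul, mul_neg, ← sub_eq_add_neg, mul_left_comm (x _)]
      _ ≤ _ := trace_pow_add_mul_trace_mul_sub_le hKM hK m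
  · rw [sum_smul_eq_of_eq_one hx0 hx1 deterministic]
    refine trace_pow_le_trace_pow (hKw j) ?_ m
    gcongr
    exact smul_le_of_le_one_left (vecMulVec_self_nonneg _) hc

/-- Polynomial substitute, at inverse temperature `s * (m + 1)`, for the matrix-exponential
potential `tr exp (-η ∑ i, Z i)`. -/
def powTracePotential {κ : Type*} [Fintype κ] (s : ℝ) (m : ℕ) (Z : κ → Matrix n n ℝ) : ℝ :=
  ((1 - s • ∑ i, Z i) ^ (m + 1)).trace

theorem powTracePotential_of_sum_eq_smul_one {κ : Type*} [Fintype κ] {Z : κ → Matrix n n ℝ} {c : ℝ}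
    (hZ : ∑ i, Z i = c • 1) (s : ℝ) (m : ℕ) :
    powTracePotential s m Z = Fintype.card n * (1 - s * c) ^ (m + 1) := by
  have hscalar : 1 - s • c • (1 : Matrix n n ℝ) = (1 - s * c) • 1 := by module
  rw [powTracePotential, hZ, hscalar, smul_pow, one_pow, trace_smul, trace_one, smul_eq_mul,
    mul_comm]

theorem smul_one_le_sum_of_powTracePotential_le {κ : Type*} [Fintype κ] {Z : κ → Matrix n n ℝ}
    {s b : ℝ} (hs : 0 < s) (hsb : s * b ≤ 1) (hZ : 0 ≤ 1 - s • ∑ i, Z i) {m : ℕ}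
    (h : powTracePotential s m Z ≤ (1 - s * b) ^ (m + 1)) : b • 1 ≤ ∑ i, Z i := by
  have upper : 1 - s • ∑ i, Z i ≤ (1 - s * b) • 1 :=
    le_smul_one_of_trace_pow_le hZ (sub_nonneg.2 hsb) m.succ_ne_zero h
  rw [sub_smul, one_smul, mul_smul] at upper
  exact le_of_smul_le_smul_left ((sub_le_sub_iff_left _).1 upper) hs

theorem smul_sum_smul_vecMulVec_le_smul_one {ι : Type*} [Fintype ι] {w : ι → n → ℝ} {x : ι → ℝ}
    (hx0 : ∀ j, 0 ≤ x j) (hx1 : ∑ j, x j = 1) {r c : ℝ} (hc : c ≤ 1)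
    (hr : ∀ j, w j ⬝ᵥ w j ≤ r) :
    c • ∑ j, x j • vecMulVec (w j) (w j) ≤ r • 1 := by
  calc c • ∑ j, x j • vecMulVec (w j) (w j)
      ≤ ∑ j, x j • vecMulVec (w j) (w j) :=
        smul_le_of_le_one_left (Finset.sum_nonneg fun j _ =>
          smul_nonneg (hx0 j) (vecMulVec_self_nonneg (w j))) hc
    _ ≤ ∑ j, x j • r • 1 := Finset.sum_le_sum fun j _ =>
        smul_le_smul_of_nonneg_left (vecMulVec_self_le_smul_one (hr j)) (hx0 j)
    _ = r • 1 := by rw [← Finset.sum_smul, hx1, one_smul]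

theorem exists_choice_powTracePotential_le {κ : Type*} [Fintype κ] {P : κ → Type*}
    [∀ i, Fintype (P i)] {w : (i : κ) → P i → n → ℝ} {x : (i : κ) → P i → ℝ}
    (hx0 : ∀ i j, 0 ≤ x i j) (hx1 : ∀ i, ∑ j, x i j = 1) {r s t c : ℝ} (hs : 0 ≤ s) (ht : 0 < t)
    (hc0 : 0 ≤ c) (hc : c ≤ 1) (hr : ∀ i j, w i j ⬝ᵥ w i j ≤ r)
    (hsr : s * (Fintype.card κ * r) ≤ 1 - t) {m : ℕ}
    (hfrac : ∀ i j, 0 < x i j → x i j < 1 → m * s * (w i j ⬝ᵥ w i j) ≤ (1 - c) * t) :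
    ∃ σ : (i : κ) → P i, powTracePotential s m (fun i => vecMulVec (w i (σ i)) (w i (σ i))) ≤
      powTracePotential s m fun i => c • ∑ j, x i j • vecMulVec (w i j) (w i j) := by
  classical
  have hM (i : κ) : c • ∑ j, x i j • vecMulVec (w i j) (w i j) ≤ r • 1 :=
    smul_sum_smul_vecMulVec_le_smul_one (hx0 i) (hx1 i) hc (hr i)
  have hP (i : κ) (j : P i) : vecMulVec (w i j) (w i j) ≤ r • 1 :=
    vecMulVec_self_le_smul_one (hr i j)
  refine exists_choice_le_of_forall_exists_update_le
    (C := fun _ => Set.Iic (r • (1 : Matrix n n ℝ))) hM hP fun Z hZ a hZa => ?_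
  have lower {Y : κ → Matrix n n ℝ} (hY : ∀ i, Y i ≤ r • 1) : t • 1 ≤ 1 - s • ∑ i, Y i :=
    smul_one_le_one_sub_smul_sum hs hsr hY
  have ht1 : (0 : Matrix n n ℝ) ≤ t • 1 := smul_nonneg ht.le zero_le_one
  have downdate (B : Matrix n n ℝ) : 1 - s • ∑ i, Z i + s • Z a - s • B =
      1 - s • ∑ i, Function.update Z a B i := by
    rw [Finset.sum_update_of_mem (Finset.mem_univ a),
      Finset.sum_eq_add_sum_sdiff_singleton_of_mem (Finset.mem_univ a) Z]
    module
  have hZa0 : 0 ≤ s • Z a := by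
    rw [hZa]
    exact smul_nonneg hs <| smul_nonneg hc0 <| Finset.sum_nonneg fun j _ =>
      smul_nonneg (hx0 a j) (vecMulVec_self_nonneg (w a j))
  obtain ⟨j, hj⟩ := exists_trace_sub_smul_vecMulVec_pow_le (hx0 a) (hx1 a)
    (K := 1 - s • ∑ i, Z i + s • Z a) hs ht hc
    ((lower hZ).trans (le_add_of_nonneg_right hZa0))
    (fun j => by
      rw [downdate]
      exact ht1.trans <| lower <| update_le_iff.2 ⟨hP a j, fun i _ => hZ i⟩)
    (by rw [← hZa, add_sub_cancel_right]; exact ht1.trans (lower hZ)) (hfrac a)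
  rw [downdate, ← hZa, add_sub_cancel_right] at hj
  exact ⟨j, hj⟩

theorem exists_choice_smul_one_le_sum_vecMulVec {κ : Type*} [Fintype κ] {P : κ → Type*}
    [∀ i, Fintype (P i)] {w : (i : κ) → P i → n → ℝ} {x : (i : κ) → P i → ℝ}
    (hx0 : ∀ i j, 0 ≤ x i j) (hx1 : ∀ i, ∑ j, x i j = 1)
    (hI : ∑ i, ∑ j, x i j • vecMulVec (w i j) (w i j) = 1) {ε η t : ℝ} (hε0 : 0 < ε)
    (hε1 : ε < 1) (hη0 : 0 < η) (hη : Real.log (Fintype.card n) ≤ η * (ε / 2)) (ht0 : 0 < t)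
    (ht1 : t < 1)
    (hshort : ∀ i j, 0 < x i j → x i j < 1 → η * (w i j ⬝ᵥ w i j) ≤ ε / 2 * t) :
    ∃ σ : (i : κ) → P i, (1 - ε) • 1 ≤ ∑ i, vecMulVec (w i (σ i)) (w i (σ i)) := by
  obtain ⟨r, hr⟩ : ∃ r, ∀ i j, w i j ⬝ᵥ w i j ≤ r := by
    obtain ⟨r, hr⟩ := (Set.finite_range fun p : Σ i, P i => w p.1 p.2 ⬝ᵥ w p.1 p.2).bddAbove
    exact ⟨r, fun i j => hr ⟨⟨i, j⟩, rfl⟩⟩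
  obtain ⟨m, hs1, hsr⟩ := exists_div_natCast_add_one_le η (Fintype.card κ * r) (sub_pos.2 ht1)
  set s := η / (m + 1) with hs
  have hs0 : 0 < s := by positivity
  have hNs : (m + 1) * s = η := by rw [hs]; field_simp
  obtain ⟨σ, hσ⟩ := exists_choice_powTracePotential_le (c := 1 - ε / 2) (m := m) hx0 hx1 hs0.le ht0
    (by linarith) (by linarith) hr hsr fun i j hfrac0 hfrac1 => by
      have hw : 0 ≤ w i j ⬝ᵥ w i j := by simpa using dotProduct_self_star_nonneg (w i j)
      calc m * s * (w i j ⬝ᵥ w i j) ≤ η * (w i j ⬝ᵥ w i j) := by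
            gcongr
            linarith
        _ ≤ ε / 2 * t := hshort i j hfrac0 hfrac1
        _ = (1 - (1 - ε / 2)) * t := by ring
  refine ⟨σ, smul_one_le_sum_of_powTracePotential_le hs0 (by nlinarith) ?_ (hσ.trans ?_)⟩
  · exact (smul_nonneg ht0.le zero_le_one).trans <|
      smul_one_le_one_sub_smul_sum hs0.le hsr fun i => vecMulVec_self_le_smul_one (hr i (σ i))
  · rw [powTracePotential_of_sum_eq_smul_one (by rw [← Finset.smul_sum, hI])]
    refine mul_one_sub_pow_le_one_sub_pow hs0.le (by linarith) hε0.le hε1.le ?_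
    push_cast
    rwa [hNs]

theorem exists_isUnit_symm_mul_self_eq {X : Matrix n n ℝ} (hX : X.PosDef) :
    ∃ R : Matrix n n ℝ, IsUnit R ∧ Rᵀ = R ∧ X = R * R := by
  obtain ⟨R, hR, hself, hXR⟩ :=
    CStarAlgebra.isStrictlyPositive_iff_exists_isUnit_and_isSelfAdjoint_and_eq_mul_self.1
      hX.isStrictlyPositive
  refine ⟨R, hR, ?_, hXR⟩
  simpa [IsSelfAdjoint, star_eq_conjTranspose] using hself

theorem partition_rounding_exists_general {κ : Type*} [Fintype κ] {ε δ : ℝ} (hε0 : 0 < ε)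
    (hε1 : ε < 1) (hδ : 4 * δ * Real.log (Fintype.card n) < ε ^ 2)
    {P : κ → Type*} [∀ i, Fintype (P i)] (v : (i : κ) → P i → n → ℝ) (x : (i : κ) → P i → ℝ)
    (hx0 : ∀ i j, 0 ≤ x i j) (hx1 : ∀ i, ∑ j, x i j = 1) (X : Matrix n n ℝ)
    (hX : X = ∑ i, ∑ j, x i j • vecMulVec (v i j) (v i j)) (hXpd : X.PosDef)
    (hshort : ∀ i j, 0 < x i j → x i j < 1 → v i j ⬝ᵥ (X⁻¹ *ᵥ v i j) ≤ δ) :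
    ∃ σ : (i : κ) → P i,
      ((∑ i, vecMulVec (v i (σ i)) (v i (σ i))) - (1 - ε) • X).PosSemidef := by
  obtain ⟨R, hRunit, hRT, hXR⟩ := exists_isUnit_symm_mul_self_eq hXpd
  have hdet : IsUnit R.det := (isUnit_iff_isUnit_det R).1 hRunit
  obtain ⟨w, rfl⟩ : ∃ w : (i : κ) → P i → n → ℝ, v = fun i j => R *ᵥ w i j :=
    ⟨fun i j => R⁻¹ *ᵥ v i j, by simp [mulVec_mulVec, mul_nonsing_inv _ hdet]⟩
  have conj_vecMulVec (u : n → ℝ) : vecMulVec (R *ᵥ u) (R *ᵥ u) = R * vecMulVec u u * R := by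
    rw [mul_vecMulVec, vecMulVec_mul, ← mulVec_transpose, hRT]
  have norm_whitened (u : n → ℝ) : (R *ᵥ u) ⬝ᵥ (X⁻¹ *ᵥ (R *ᵥ u)) = u ⬝ᵥ u := by
    rw [hXR, Matrix.mul_inv_rev, mulVec_mulVec, Matrix.mul_assoc, nonsing_inv_mul _ hdet,
      Matrix.mul_one, ← vecMul_transpose, hRT, ← dotProduct_mulVec, mulVec_mulVec,
      mul_nonsing_inv _ hdet, one_mulVec]
  have isotropic : ∑ i, ∑ j, x i j • vecMulVec (w i j) (w i j) = 1 := by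
    refine hRunit.mul_left_cancel (hRunit.mul_right_cancel ?_)
    rw [Matrix.mul_one, ← hXR, hX]
    simp only [conj_vecMulVec, Matrix.mul_sum, Matrix.sum_mul, mul_smul_comm, smul_mul_assoc]
  obtain ⟨η, t, hη0, hη, ht0, ht1, hηδ⟩ :=
    exists_inverse_temperature hε0 (Real.log_natCast_nonneg _) hδ
  obtain ⟨σ, hσ⟩ := exists_choice_smul_one_le_sum_vecMulVec hx0 hx1 isotropic hε0 hε1 hη0 hη ht0 ht1
    fun i j hfrac0 hfrac1 => (mul_le_mul_of_nonneg_left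
      (norm_whitened (w i j) ▸ hshort i j hfrac0 hfrac1) hη0.le).trans hηδ
  refine ⟨σ, Matrix.le_iff.1 ?_⟩
  have := IsSelfAdjoint.conjugate_le_conjugate hσ (c := R) (by
    simpa [IsSelfAdjoint, star_eq_conjTranspose] using hRT)
  simpa only [conj_vecMulVec, hXR, mul_smul_comm, smul_mul_assoc, Matrix.mul_one, Matrix.mul_sum,
    Matrix.sum_mul] using this

end

theorem mul_lambdaMin_le_lambdaMin {d : ℕ} (hd : 0 < d) {A B : Matrix (Fin d) (Fin d) ℝ} {c : ℝ}
    (hc : 0 < c) (hA : A.PosSemidef) (hAB : (B - c • A).PosSemidef) :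
    c * lambdaMin A ≤ lambdaMin B := by
  rw [← le_div_iff₀' hc]
  refine csSup_le ⟨0, by simpa using hA⟩ fun a ha => ?_
  rw [le_div_iff₀' hc]
  refine le_csSup ⟨B ⟨0, hd⟩ ⟨0, hd⟩, fun b hb => ?_⟩ ?_
  · simpa using PosSemidef.diag_nonneg hb (i := ⟨0, hd⟩)
  · have hshift : B - (c * a) • (1 : Matrix (Fin d) (Fin d) ℝ) =
        B - c • A + c • (A - a • (1 : Matrix (Fin d) (Fin d) ℝ)) := by module
    rw [Set.mem_ofPred_eq, hshift]
    exact hAB.add (PosSemidef.smul ha hc.le)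

/-- If `X = ∑ᵢ ∑_{j∈Pᵢ} xᵢⱼ vᵢⱼvᵢⱼᵀ ≻ 0` where `x` is nonnegative with
`∑_{j∈Pᵢ} xᵢⱼ = 1` for each part, and every fractionally chosen vector satisfies
`vᵢⱼᵀ X⁻¹ vᵢⱼ ≤ ε²/(10 ln d)`, then there is a choice function `σ` with
`∑ᵢ v_{iσ(i)}v_{iσ(i)}ᵀ ⪰ (1−ε)X`, and in particular
`λ_min(∑ᵢ v_{iσ(i)}v_{iσ(i)}ᵀ) ≥ (1−ε) λ_min(X)`. -/
theorem partition_rounding_exists {d k : ℕ} (hd : 2 ≤ d)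
    {ε : ℝ} (hε0 : 0 < ε) (hε1 : ε < 1)
    {P : Fin k → Type*} [∀ i, Fintype (P i)]
    (v : (i : Fin k) → P i → Fin d → ℝ)
    (x : (i : Fin k) → P i → ℝ)
    (hx0 : ∀ i j, 0 ≤ x i j) (hx1 : ∀ i, ∑ j, x i j = 1)
    (X : Matrix (Fin d) (Fin d) ℝ)
    (hX : X = ∑ i, ∑ j, x i j • vecMulVec (v i j) (v i j))
    (hXpd : X.PosDef)
    (hshort : ∀ i j, 0 < x i j → x i j < 1 →
      v i j ⬝ᵥ (X⁻¹ *ᵥ v i j) ≤ ε ^ 2 / (10 * Real.log d)) :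
    ∃ σ : (i : Fin k) → P i,
      ((∑ i, vecMulVec (v i (σ i)) (v i (σ i))) - (1 - ε) • X).PosSemidef ∧
      (1 - ε) * lambdaMin X ≤ lambdaMin (∑ i, vecMulVec (v i (σ i)) (v i (σ i))) := by
  have hlog : 0 < Real.log d := Real.log_pos (by exact_mod_cast hd)
  have hδ : 4 * (ε ^ 2 / (10 * Real.log d)) * Real.log (Fintype.card (Fin d)) < ε ^ 2 := by
    rw [Fintype.card_fin]
    field_simp
    norm_num
  obtain ⟨σ, hσ⟩ := partition_rounding_exists_general hε0 hε1 hδ v x hx0 hx1 X hX hXpd hshort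
  exact ⟨σ, hσ, mul_lambdaMin_le_lambdaMin (by omega) (sub_pos.2 hε1) hXpd.posSemidef hσ⟩
end

section
/- Let d ≥ 2, ε ∈ (0,1), and let [k] index parts P_1, …, P_k of a partition of a finite ground set E with vectors v_{ij} ∈ ℝ^d for (i,j) ∈ E. Let OPT = max over choice functions σ (with σ(i) ∈ P_i) of λ_min(Σ_{i=1}^k v_{iσ(i)}v_{iσ(i)}ᵀ), and assume OPT > 0. Then there exists a set S ⊆ E with |S| ≤ 10·d·ln(d)/ε² + d such that A_S = Σ_{(i,j)∈S} v_{ij}v_{ij}ᵀ is invertible and, letting CP(S) denote the supremum of λ_min(Σ_{(i,j)∈E} x_{ij}·v_{ij}v_{ij}ᵀ) over all nonnegative weights x with Σ_{j∈P_i} x_{ij} = 1 for each i, x_{ij} = 1 for all (i,j) ∈ S, and x_{ij} = 0 for all (i,j) ∉ S with v_{ij}ᵀA_S⁻¹v_{ij} > ε²/(10·ln(d)), one has OPT ≤ CP(S) ≤ OPT/(1−ε). -/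
open Matrix

/-- The value `CP(S)` of the convex program for the minimum eigenvalue problem over a
partitioned ground set, with the vectors indexed by `S` forced in and the vectors that are
"long" with respect to `A_S = ∑_{p∈S} v_p v_pᵀ` forced out: the supremum of
`λ_min(∑ᵢⱼ xᵢⱼ vᵢⱼvᵢⱼᵀ)` over all nonnegative `x` with `∑_{j∈Pᵢ} xᵢⱼ = 1` for each part `i`,
`xᵢⱼ = 1` on `S`, and `xᵢⱼ = 0` whenever `(i,j) ∉ S` and `vᵢⱼᵀ A_S⁻¹ vᵢⱼ > ε²/(10 ln d)`. -/
noncomputable def CPval {d k : ℕ} {P : Fin k → Type*} [∀ i, Fintype (P i)]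
    (v : (i : Fin k) → P i → Fin d → ℝ) (ε : ℝ) (S : Finset ((i : Fin k) × P i)) : ℝ :=
  sSup {r : ℝ | ∃ x : (i : Fin k) → P i → ℝ,
    (∀ i j, 0 ≤ x i j) ∧ (∀ i, ∑ j, x i j = 1) ∧
    (∀ p ∈ S, x p.1 p.2 = 1) ∧
    (∀ p : (i : Fin k) × P i, p ∉ S →
      ε ^ 2 / (10 * Real.log d) <
        v p.1 p.2 ⬝ᵥ ((∑ q ∈ S, vecMulVec (v q.1 q.2) (v q.1 q.2))⁻¹ *ᵥ v p.1 p.2) →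
      x p.1 p.2 = 0) ∧
    r = lambdaMin (∑ i, ∑ j, x i j • vecMulVec (v i j) (v i j))}

/-!
Let `τ` be an optimal choice. Among its subsets of cardinality `⌊d / η⌋ + d`, where
`η = ε² / (10 ln d)`, take the `S` that maximizes `det A_S`. Deleting or inserting a vector
multiplies the determinant by `1 ∓` its leverage, so maximality forces every vector of `τ` outside
`S` to have leverage at most `η`. The indicator of `τ` is then feasible for `CP(S)`, and
`OPT ≤ CP(S)`.

Conversely, let `x` be feasible with fractional sum `X`. Since `A_S ≤ X`, all vectors on which `x`
is properly fractional have leverage at most `η` with respect to `X` as well. After a change of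
coordinates turning `X` into `θ • 1`, where `θ = 2 ln d / ε`, they have squared norm at most
`r = θ η`, and `x` is rounded one part at a time with `tr exp (-A)` as a potential: adding `w wᵀ`
with `‖w‖² ≤ r` decreases the potential by at least `(1 - 2r) wᵀ exp (-A) w`, whereas by Klein's
inequality adding `(1 - 2r) ∑ⱼ xⱼ wⱼwⱼᵀ` decreases it by at most the `x`-average of these
quantities. Some choice thus ends with potential at most `d exp (-(1 - 2r) θ)`, which bounds its
smallest eigenvalue below by `(1 - 2r) θ - ln d ≥ (1 - ε) θ`.
-/

open scoped MatrixOrder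

/-- The `i`-th vector of the orthonormal eigenbasis of a real symmetric matrix, as a plain function
rather than an element of `EuclideanSpace`, so that `⬝ᵥ` and `vecMulVec` apply to it. -/
noncomputable def eigenvector {n : Type*} [Fintype n] [DecidableEq n] {A : Matrix n n ℝ}
    (hA : A.IsHermitian) (i : n) : n → ℝ :=
  (hA.eigenvectorBasis i).ofLp

section Spectral

variable {n : Type*} [Fintype n] [DecidableEq n] {A B : Matrix n n ℝ}

theorem cfc_eq_sum_smul_vecMulVec (hA : A.IsHermitian) (f : ℝ → ℝ) :
    cfc f A = ∑ i, f (hA.eigenvalues i) • vecMulVec (eigenvector hA i) (eigenvector hA i) := by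
  ext k l
  simp [hA.cfc_eq, IsHermitian.cfc, Matrix.mul_apply, Matrix.sum_apply, diagonal_apply,
    vecMulVec_apply, eigenvector, Unitary.conjStarAlgAut_apply, mul_left_comm, mul_assoc]

theorem trace_cfc (hA : A.IsHermitian) (f : ℝ → ℝ) :
    trace (cfc f A) = ∑ i, f (hA.eigenvalues i) := by
  rw [hA.cfc_eq, IsHermitian.cfc, Unitary.conjStarAlgAut_apply, trace_mul_cycle]
  simp [trace_diagonal]

theorem trace_cfc_mul_cfc (hA : A.IsHermitian) (hB : B.IsHermitian) (f g : ℝ → ℝ) :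
    trace (cfc f A * cfc g B) = ∑ i, ∑ j, f (hA.eigenvalues i) * g (hB.eigenvalues j) *
      (eigenvector hA i ⬝ᵥ eigenvector hB j) ^ 2 := by
  simp_rw [cfc_eq_sum_smul_vecMulVec hA, cfc_eq_sum_smul_vecMulVec hB, Finset.sum_mul_sum,
    smul_mul_smul_comm, vecMulVec_mul_vecMulVec, vecMulVec_smul, trace_sum, trace_smul,
    trace_vecMulVec, smul_eq_mul, sq]

theorem mul_cfc_eq_cfc (hA : A.IsHermitian) (f : ℝ → ℝ) :
    A * cfc f A = cfc (fun t ↦ t * f t) A := by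
  rw [cfc_mul (fun t ↦ t) f A (by fun_prop) (finite_real_spectrum.continuousOn f),
    cfc_id' ℝ A hA.isSelfAdjoint]

theorem trace_sub_mul_cfc (hA : A.IsHermitian) (hB : B.IsHermitian) (f : ℝ → ℝ) :
    trace ((B - A) * cfc f A) = ∑ i, ∑ j,
      (hB.eigenvalues j - hA.eigenvalues i) * f (hA.eigenvalues i) *
        (eigenvector hA i ⬝ᵥ eigenvector hB j) ^ 2 := by
  have h : trace ((B - A) * cfc f A) = trace (cfc f A * cfc (fun t : ℝ ↦ t) B) -
      trace (cfc (fun s ↦ s * f s) A * cfc (fun _ ↦ (1 : ℝ)) B) := by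
    rw [cfc_id' ℝ B hB.isSelfAdjoint, cfc_const_one ℝ B hB.isSelfAdjoint, ← mul_cfc_eq_cfc hA,
      Matrix.mul_one, Matrix.sub_mul, trace_sub, trace_mul_comm B]
  simp_rw [h, trace_cfc_mul_cfc hA hB, ← Finset.sum_sub_distrib]
  exact Finset.sum_congr rfl fun i _ ↦ Finset.sum_congr rfl fun j _ ↦ by ring

theorem trace_sub_sq_mul_cfc (hA : A.IsHermitian) (hB : B.IsHermitian) (f : ℝ → ℝ) :
    trace ((B - A) ^ 2 * cfc f A) = ∑ i, ∑ j,
      (hB.eigenvalues j - hA.eigenvalues i) ^ 2 * f (hA.eigenvalues i) *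
        (eigenvector hA i ⬝ᵥ eigenvector hB j) ^ 2 := by
  have hcomm : A * cfc f A = cfc f A * A := by
    simpa only [cfc_id' ℝ A hA.isSelfAdjoint] using (cfc_commute_cfc (fun s : ℝ ↦ s) f A).eq
  have hAB : trace (A * B * cfc f A) = trace (A * cfc f A * B) := by rw [trace_mul_cycle, hcomm]
  have hBA : trace (B * A * cfc f A) = trace (A * cfc f A * B) := by
    rw [Matrix.mul_assoc, trace_mul_comm]
  have h : trace ((B - A) ^ 2 * cfc f A) = trace (cfc f A * cfc (fun t : ℝ ↦ t ^ 2) B) -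
      2 * trace (cfc (fun s ↦ s * f s) A * cfc (fun t : ℝ ↦ t) B) +
      trace (cfc (fun s ↦ s * (s * f s)) A * cfc (fun _ ↦ (1 : ℝ)) B) := by
    rw [cfc_pow_id B 2 hB.isSelfAdjoint, cfc_id' ℝ B hB.isSelfAdjoint,
      cfc_const_one ℝ B hB.isSelfAdjoint, Matrix.mul_one]
    simp only [← mul_cfc_eq_cfc hA]
    calc trace ((B - A) ^ 2 * cfc f A)
        = trace (B ^ 2 * cfc f A - B * A * cfc f A - A * B * cfc f A + A * (A * cfc f A)) := by
          congr 1; noncomm_ring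
      _ = _ := by
          rw [trace_add, trace_sub, trace_sub, hAB, hBA, trace_mul_comm (B ^ 2)]; ring
  simp_rw [h, trace_cfc_mul_cfc hA hB, Finset.mul_sum, ← Finset.sum_sub_distrib,
    ← Finset.sum_add_distrib]
  exact Finset.sum_congr rfl fun i _ ↦ Finset.sum_congr rfl fun j _ ↦ by ring

theorem klein_inequality (hA : A.IsHermitian) (hB : B.IsHermitian) {f f' : ℝ → ℝ}
    (hf : ∀ s t, f t + f' t * (s - t) ≤ f s) :
    trace (cfc f B) + trace ((A - B) * cfc f' B) ≤ trace (cfc f A) := by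
  have h1 := trace_cfc_mul_cfc hB hA f fun _ ↦ 1
  have h2 := trace_sub_mul_cfc hB hA f'
  have h3 := trace_cfc_mul_cfc hB hA (fun _ ↦ 1) f
  rw [cfc_const_one ℝ A hA.isSelfAdjoint, Matrix.mul_one] at h1
  rw [cfc_const_one ℝ B hB.isSelfAdjoint, Matrix.one_mul] at h3
  simp_rw [h1, h2, h3, ← Finset.sum_add_distrib]
  refine Finset.sum_le_sum fun i _ ↦ Finset.sum_le_sum fun j _ ↦ ?_
  have := mul_le_mul_of_nonneg_right (hf (hA.eigenvalues j) (hB.eigenvalues i))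
    (sq_nonneg (eigenvector hB i ⬝ᵥ eigenvector hA j))
  linarith

theorem trace_sub_mul_cfc_sub_le (hA : A.IsHermitian) (hB : B.IsHermitian) {f : ℝ → ℝ}
    (hf : ∀ s t, (t - s) * (f s - f t) ≤ (t - s) ^ 2 * (f s + f t)) :
    trace ((B - A) * (cfc f A - cfc f B)) ≤ trace ((B - A) ^ 2 * (cfc f A + cfc f B)) := by
  have hl : trace ((B - A) * (cfc f A - cfc f B)) =
      trace ((B - A) * cfc f A) + trace ((A - B) * cfc f B) := by
    rw [← trace_add]; congr 1; noncomm_ring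
  have hr : trace ((B - A) ^ 2 * (cfc f A + cfc f B)) =
      trace ((B - A) ^ 2 * cfc f A) + trace ((A - B) ^ 2 * cfc f B) := by
    rw [← trace_add, Matrix.mul_add, ← neg_sub A B, neg_sq]
  have hlB : trace ((A - B) * cfc f B) = ∑ i, ∑ j,
      (hA.eigenvalues i - hB.eigenvalues j) * f (hB.eigenvalues j) *
        (eigenvector hA i ⬝ᵥ eigenvector hB j) ^ 2 := by
    rw [trace_sub_mul_cfc hB hA, Finset.sum_comm]
    simp_rw [dotProduct_comm (eigenvector hB _)]
  have hrB : trace ((A - B) ^ 2 * cfc f B) = ∑ i, ∑ j,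
      (hA.eigenvalues i - hB.eigenvalues j) ^ 2 * f (hB.eigenvalues j) *
        (eigenvector hA i ⬝ᵥ eigenvector hB j) ^ 2 := by
    rw [trace_sub_sq_mul_cfc hB hA, Finset.sum_comm]
    simp_rw [dotProduct_comm (eigenvector hB _)]
  simp_rw [hl, hr, hlB, hrB, trace_sub_mul_cfc hA hB, trace_sub_sq_mul_cfc hA hB,
    ← Finset.sum_add_distrib]
  refine Finset.sum_le_sum fun i _ ↦ Finset.sum_le_sum fun j _ ↦ ?_
  have := mul_le_mul_of_nonneg_right (hf (hA.eigenvalues i) (hB.eigenvalues j))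
    (sq_nonneg (eigenvector hA i ⬝ᵥ eigenvector hB j))
  linarith

end Spectral

theorem exp_neg_tangent_le (s t : ℝ) :
    Real.exp (-t) + -Real.exp (-t) * (s - t) ≤ Real.exp (-s) := by
  have h := mul_le_mul_of_nonneg_left (Real.add_one_le_exp (t - s)) (Real.exp_pos (-t)).le
  rw [← Real.exp_add, show -t + (t - s) = -s by ring] at h
  linarith

theorem sub_mul_exp_neg_sub_exp_neg_le (s t : ℝ) :
    (t - s) * (Real.exp (-s) - Real.exp (-t)) ≤
      (t - s) ^ 2 * (Real.exp (-s) + Real.exp (-t)) := by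
  rcases le_total s t with h | h
  · nlinarith [mul_le_mul_of_nonneg_left (exp_neg_tangent_le t s) (sub_nonneg.2 h),
      mul_nonneg (sq_nonneg (t - s)) (Real.exp_pos (-t)).le]
  · nlinarith [mul_le_mul_of_nonneg_left (exp_neg_tangent_le s t) (sub_nonneg.2 h),
      mul_nonneg (sq_nonneg (t - s)) (Real.exp_pos (-s)).le]

theorem trace_vecMulVec_mul {m n R : Type*} [Fintype m] [Fintype n] [CommSemiring R]
    (v : m → R) (w : n → R) (M : Matrix n m R) :
    trace (vecMulVec v w * M) = w ⬝ᵥ (M *ᵥ v) := by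
  rw [vecMulVec_mul, trace_vecMulVec, dotProduct_comm, dotProduct_mulVec]

theorem isHermitian_vecMulVec_self {n : Type*} (w : n → ℝ) : (vecMulVec w w).IsHermitian := by
  ext; simp [vecMulVec_apply, mul_comm]

theorem isHermitian_sum_smul_vecMulVec_self {n κ : Type*} (s : Finset κ) (c : κ → ℝ)
    (w : κ → n → ℝ) : (∑ j ∈ s, c j • vecMulVec (w j) (w j)).IsHermitian :=
  isSelfAdjoint_sum s fun j _ ↦ (isHermitian_vecMulVec_self (w j)).smul (.all (c j))

theorem isHermitian_sum_vecMulVec_self {n κ : Type*} (s : Finset κ) (w : κ → n → ℝ) :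
    (∑ j ∈ s, vecMulVec (w j) (w j)).IsHermitian :=
  isSelfAdjoint_sum s fun j _ ↦ isHermitian_vecMulVec_self (w j)

/-- The matrix exponential `exp (-A)` of a real symmetric matrix, obtained from the functional
calculus so that trace inequalities reduce to scalar ones. Its trace is the potential function of
the rounding argument. -/
noncomputable def expNeg {n : Type*} [Fintype n] [DecidableEq n] (A : Matrix n n ℝ) :
    Matrix n n ℝ :=
  cfc (fun t ↦ Real.exp (-t)) A

section ExpNeg

variable {n : Type*} [Fintype n] [DecidableEq n] {A B : Matrix n n ℝ}

theorem posSemidef_expNeg (A : Matrix n n ℝ) : (expNeg A).PosSemidef :=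
  nonneg_iff_posSemidef.1 (cfc_nonneg fun _ _ ↦ (Real.exp_pos _).le)

theorem dotProduct_expNeg_mulVec_nonneg (A : Matrix n n ℝ) (w : n → ℝ) :
    0 ≤ w ⬝ᵥ (expNeg A *ᵥ w) := by
  simpa using (posSemidef_expNeg A).dotProduct_mulVec_nonneg w

theorem trace_expNeg_sub_le (hA : A.IsHermitian) (hB : B.IsHermitian) :
    trace (expNeg A) - trace ((B - A) * expNeg A) ≤ trace (expNeg B) := by
  have h := klein_inequality hB hA exp_neg_tangent_le
  rwa [cfc_neg, Matrix.mul_neg, trace_neg, ← sub_eq_add_neg] at h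

theorem dotProduct_expNeg_sub_mulVec_le (hA : A.IsHermitian) (w : n → ℝ) :
    w ⬝ᵥ (expNeg A *ᵥ w) - w ⬝ᵥ (expNeg (A + vecMulVec w w) *ᵥ w) ≤
      (w ⬝ᵥ w) * (w ⬝ᵥ (expNeg A *ᵥ w) + w ⬝ᵥ (expNeg (A + vecMulVec w w) *ᵥ w)) := by
  have h := trace_sub_mul_cfc_sub_le hA (hA.add (isHermitian_vecMulVec_self w))
    sub_mul_exp_neg_sub_exp_neg_le
  rwa [add_sub_cancel_left, sq (vecMulVec w w), vecMulVec_mul_vecMulVec, vecMulVec_smul,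
    Matrix.smul_mul, trace_smul, trace_vecMulVec_mul, trace_vecMulVec_mul, sub_mulVec, add_mulVec,
    dotProduct_sub, dotProduct_add] at h

theorem trace_expNeg_add_vecMulVec_le (hA : A.IsHermitian) {w : n → ℝ} {r : ℝ}
    (hw : w ⬝ᵥ w ≤ r) :
    trace (expNeg (A + vecMulVec w w)) ≤
      trace (expNeg A) - (1 - 2 * r) * (w ⬝ᵥ (expNeg A *ᵥ w)) := by
  set p := w ⬝ᵥ (expNeg A *ᵥ w)
  set q := w ⬝ᵥ (expNeg (A + vecMulVec w w) *ᵥ w)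
  have hp : 0 ≤ p := dotProduct_expNeg_mulVec_nonneg A w
  have hs : 0 ≤ w ⬝ᵥ w := by simpa using dotProduct_star_self_nonneg w
  have hpq : (1 - 2 * r) * p ≤ q := by
    have hstep : (1 - w ⬝ᵥ w) * p ≤ (1 + w ⬝ᵥ w) * q := by
      linarith [dotProduct_expNeg_sub_mulVec_le hA w]
    have hcoeff : (1 + w ⬝ᵥ w) * (1 - 2 * (w ⬝ᵥ w)) ≤ 1 - w ⬝ᵥ w := by nlinarith
    have hself : (1 - 2 * (w ⬝ᵥ w)) * p ≤ q :=
      le_of_mul_le_mul_left (a := 1 + w ⬝ᵥ w)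
        (by linarith [mul_le_mul_of_nonneg_right hcoeff hp]) (by linarith)
    linarith [mul_le_mul_of_nonneg_right hw hp]
  have h := trace_expNeg_sub_le (hA.add (isHermitian_vecMulVec_self w)) hA
  rw [sub_add_cancel_left, Matrix.neg_mul, trace_neg, trace_vecMulVec_mul] at h
  linarith

theorem trace_expNeg_add_vecMulVec_le_add_smul (hA : A.IsHermitian) (w : n → ℝ) {c : ℝ}
    (hc : c ≤ 1) :
    trace (expNeg (A + vecMulVec w w)) ≤ trace (expNeg (A + c • vecMulVec w w)) := by
  have hw := isHermitian_vecMulVec_self w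
  have h := trace_expNeg_sub_le (hA.add hw) (hA.add (hw.smul (.all c)))
  have hsub : A + c • vecMulVec w w - (A + vecMulVec w w) = -((1 - c) • vecMulVec w w) := by
    module
  rw [hsub, Matrix.neg_mul, trace_neg, Matrix.smul_mul, trace_smul, trace_vecMulVec_mul,
    smul_eq_mul] at h
  have := mul_nonneg (sub_nonneg.2 hc) (dotProduct_expNeg_mulVec_nonneg (A + vecMulVec w w) w)
  linarith

theorem trace_expNeg_smul_one (c : ℝ) :
    trace (expNeg (c • (1 : Matrix n n ℝ))) = Fintype.card n * Real.exp (-c) := by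
  rw [expNeg, ← Algebra.algebraMap_eq_smul_one, cfc_algebraMap, Algebra.algebraMap_eq_smul_one,
    trace_smul, trace_one, smul_eq_mul, mul_comm]

theorem smul_one_le_iff_le_eigenvalues (hA : A.IsHermitian) (c : ℝ) :
    c • 1 ≤ A ↔ ∀ i, c ≤ hA.eigenvalues i := by
  rw [← Algebra.algebraMap_eq_smul_one, algebraMap_le_iff_le_spectrum hA.isSelfAdjoint,
    hA.spectrum_real_eq_range_eigenvalues, Set.forall_mem_range]

theorem smul_one_le_of_trace_expNeg_le (hA : A.IsHermitian) {c : ℝ}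
    (h : trace (expNeg A) ≤ Real.exp (-c)) : c • 1 ≤ A := by
  refine (smul_one_le_iff_le_eigenvalues hA c).2 fun i ↦ ?_
  rw [expNeg, trace_cfc hA] at h
  have hi : Real.exp (-hA.eigenvalues i) ≤ Real.exp (-c) :=
    (Finset.single_le_sum (f := fun i ↦ Real.exp (-hA.eigenvalues i))
      (fun i _ ↦ (Real.exp_pos _).le) (Finset.mem_univ i)).trans h
  simpa using hi

end ExpNeg

theorem eq_single_of_mem_stdSimplex {κ : Type*} [Fintype κ] [DecidableEq κ] {x : κ → ℝ}
    (hx : x ∈ stdSimplex ℝ κ) {j : κ} (hj : x j = 1) : x = Pi.single j 1 := by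
  have hsum : ∑ l ∈ Finset.univ.erase j, x l = 0 := by
    linarith [hx.2, Finset.add_sum_erase Finset.univ x (Finset.mem_univ j)]
  ext l
  rcases eq_or_ne l j with rfl | hl
  · rw [hj, Pi.single_eq_same]
  · rw [Pi.single_eq_of_ne hl]
    exact (Finset.sum_eq_zero_iff_of_nonneg fun l _ ↦ hx.1 l).1 hsum l (by simp [hl])

section Rounding

variable {n : Type*} [Fintype n] [DecidableEq n]

theorem trace_expNeg_sub_sum_le {κ : Type*} [Fintype κ] {A : Matrix n n ℝ} (hA : A.IsHermitian)
    (c : κ → ℝ) (w : κ → n → ℝ) :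
    trace (expNeg A) - ∑ j, c j * (w j ⬝ᵥ (expNeg A *ᵥ w j)) ≤
      trace (expNeg (A + ∑ j, c j • vecMulVec (w j) (w j))) := by
  have h := trace_expNeg_sub_le hA (hA.add (isHermitian_sum_smul_vecMulVec_self Finset.univ c w))
  simpa only [add_sub_cancel_left, Matrix.sum_mul, trace_sum, Matrix.smul_mul, trace_smul,
    trace_vecMulVec_mul, smul_eq_mul] using h

theorem exists_trace_expNeg_add_vecMulVec_le {κ : Type*} [Fintype κ] {w : κ → n → ℝ} {x : κ → ℝ}
    (hx : x ∈ stdSimplex ℝ κ) {r : ℝ} (hr : 0 ≤ r) (hw : ∀ j, 0 < x j → x j < 1 → w j ⬝ᵥ w j ≤ r)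
    {A : Matrix n n ℝ} (hA : A.IsHermitian) :
    ∃ j, trace (expNeg (A + vecMulVec (w j) (w j))) ≤
      trace (expNeg (A + (1 - 2 * r) • ∑ j, x j • vecMulVec (w j) (w j))) := by
  classical
  by_cases hone : ∃ j, x j = 1
  · obtain ⟨j, hj⟩ := hone
    refine ⟨j, ?_⟩
    have hsum : ∑ l, x l • vecMulVec (w l) (w l) = vecMulVec (w j) (w j) := by
      simp [eq_single_of_mem_stdSimplex hx hj, Pi.single_apply]
    rw [hsum]
    exact trace_expNeg_add_vecMulVec_le_add_smul hA (w j) (by linarith)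
  have hlower := trace_expNeg_sub_sum_le hA (fun j ↦ (1 - 2 * r) * x j) w
  simp only [mul_smul, ← Finset.smul_sum] at hlower
  have hupper : ∑ j, x j • trace (expNeg (A + vecMulVec (w j) (w j))) ≤
      trace (expNeg A) - ∑ j, (1 - 2 * r) * x j * (w j ⬝ᵥ (expNeg A *ᵥ w j)) := by
    calc ∑ j, x j • trace (expNeg (A + vecMulVec (w j) (w j)))
        ≤ ∑ j, x j • (trace (expNeg A) - (1 - 2 * r) * (w j ⬝ᵥ (expNeg A *ᵥ w j))) := by
          refine Finset.sum_le_sum fun j _ ↦ ?_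
          rcases (hx.1 j).eq_or_lt with h0 | h0
          · simp [← h0]
          · have h1 := (mem_Icc_of_mem_stdSimplex hx j).2.lt_of_ne fun h ↦ hone ⟨j, h⟩
            exact smul_le_smul_of_nonneg_left
              (trace_expNeg_add_vecMulVec_le hA (hw j h0 h1)) h0.le
      _ = _ := by
          simp_rw [smul_sub, Finset.sum_sub_distrib, ← Finset.sum_smul, hx.2, one_smul,
            smul_eq_mul, mul_assoc, mul_left_comm (x _)]
  by_contra! hlt
  have havg := (convex_Ioi _).sum_mem (fun j _ ↦ hx.1 j) hx.2 fun j _ ↦ Set.mem_Ioi.2 (hlt j)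
  exact (hupper.trans hlower).not_gt havg

variable {ι : Type*} {P : ι → Type*} [∀ i, Fintype (P i)]
  {w : (i : ι) → P i → n → ℝ} {x : (i : ι) → P i → ℝ}

theorem exists_choice_trace_expNeg_le (hx : ∀ i, x i ∈ stdSimplex ℝ (P i))
    {r : ℝ} (hr : 0 ≤ r) (hw : ∀ i j, 0 < x i j → x i j < 1 → w i j ⬝ᵥ w i j ≤ r) (s : Finset ι)
    {A : Matrix n n ℝ} (hA : A.IsHermitian) :
    ∃ σ : (i : ι) → P i, trace (expNeg (A + ∑ i ∈ s, vecMulVec (w i (σ i)) (w i (σ i)))) ≤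
      trace (expNeg (A + (1 - 2 * r) • ∑ i ∈ s, ∑ j, x i j • vecMulVec (w i j) (w i j))) := by
  classical
  induction s using Finset.induction_on generalizing A with
  | empty =>
    have (i : ι) : Nonempty (P i) := by
      by_contra! h
      simpa [stdSimplex_of_isEmpty_index] using hx i
    exact ⟨fun i ↦ Classical.arbitrary (P i), by simp⟩
  | insert i₀ s hi₀ ih =>
    set E := (1 - 2 * r) • ∑ i ∈ s, ∑ j, x i j • vecMulVec (w i j) (w i j)
    have hE : E.IsHermitian := .smul (isSelfAdjoint_sum s fun i _ ↦
      isHermitian_sum_smul_vecMulVec_self Finset.univ (x i) (w i)) (.all _)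
    obtain ⟨j, hj⟩ := exists_trace_expNeg_add_vecMulVec_le (hx i₀) hr (hw i₀) (hA.add hE)
    obtain ⟨σ, hσ⟩ := ih (hA.add (isHermitian_vecMulVec_self (w i₀ j)))
    refine ⟨Function.update σ i₀ j, ?_⟩
    have hupdate : ∑ i ∈ s, vecMulVec (w i (Function.update σ i₀ j i))
        (w i (Function.update σ i₀ j i)) = ∑ i ∈ s, vecMulVec (w i (σ i)) (w i (σ i)) :=
      Finset.sum_congr rfl fun i hi ↦ by
        rw [Function.update_of_ne (ne_of_mem_of_not_mem hi hi₀)]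
    rw [Finset.sum_insert hi₀, Finset.sum_insert hi₀, Function.update_self, hupdate, ← add_assoc,
      smul_add]
    rw [add_right_comm] at hj
    exact (hσ.trans hj).trans_eq (by rw [add_assoc, add_comm E])

theorem exists_choice_smul_one_le [Fintype ι] [Nonempty n] (hx : ∀ i, x i ∈ stdSimplex ℝ (P i))
    {r θ : ℝ} (hr : 0 ≤ r) (hw : ∀ i j, 0 < x i j → x i j < 1 → w i j ⬝ᵥ w i j ≤ r)
    (hθ : ∑ i, ∑ j, x i j • vecMulVec (w i j) (w i j) = θ • 1) :
    ∃ σ : (i : ι) → P i, ((1 - 2 * r) * θ - Real.log (Fintype.card n)) • (1 : Matrix n n ℝ) ≤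
      ∑ i, vecMulVec (w i (σ i)) (w i (σ i)) := by
  obtain ⟨σ, hσ⟩ := exists_choice_trace_expNeg_le hx hr hw Finset.univ (isHermitian_zero (n := n))
  have hlog : Fintype.card n * Real.exp (-((1 - 2 * r) * θ)) =
      Real.exp (-((1 - 2 * r) * θ - Real.log (Fintype.card n))) := by
    rw [neg_sub', sub_neg_eq_add, Real.exp_add, Real.exp_log (by positivity), mul_comm]
  rw [zero_add, zero_add, hθ, smul_smul, trace_expNeg_smul_one, hlog] at hσ
  exact ⟨σ, smul_one_le_of_trace_expNeg_le (isHermitian_sum_vecMulVec_self _ _) hσ⟩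

end Rounding

section FracSum

variable {ι n : Type*} [Fintype ι] {P : ι → Type*} [∀ i, Fintype (P i)]

/-- The fractional sum `∑ᵢⱼ xᵢⱼ vᵢⱼvᵢⱼᵀ` whose smallest eigenvalue is the objective of the convex
program. -/
def fracSum (v : (i : ι) → P i → n → ℝ) (x : (i : ι) → P i → ℝ) : Matrix n n ℝ :=
  ∑ i, ∑ j, x i j • vecMulVec (v i j) (v i j)

theorem fracSum_single [∀ i, DecidableEq (P i)] (v : (i : ι) → P i → n → ℝ) (τ : (i : ι) → P i) :
    fracSum v (fun i ↦ Pi.single (τ i) 1) = ∑ i, vecMulVec (v i (τ i)) (v i (τ i)) := by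
  simp [fracSum, Pi.single_apply]

theorem isHermitian_fracSum (v : (i : ι) → P i → n → ℝ) (x : (i : ι) → P i → ℝ) :
    (fracSum v x).IsHermitian :=
  isSelfAdjoint_sum _ fun i _ ↦ isHermitian_sum_smul_vecMulVec_self _ (x i) (v i)

end FracSum

section Whitening

variable {n : Type*} [Fintype n] [DecidableEq n] {X : Matrix n n ℝ}

theorem vecMulVec_mulVec_self {m n R : Type*} [Fintype n] [CommSemiring R] (C : Matrix m n R)
    (v : n → R) : vecMulVec (C *ᵥ v) (C *ᵥ v) = C * vecMulVec v v * Cᵀ := by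
  rw [mul_vecMulVec, vecMulVec_mul, vecMul_transpose]

open scoped Matrix.Norms.L2Operator in
theorem exists_isUnit_eq_transpose_mul_self (hX : X.PosDef) :
    ∃ C : Matrix n n ℝ, IsUnit C ∧ X = Cᵀ * C := by
  obtain ⟨C, hC, h⟩ := CStarAlgebra.isStrictlyPositive_iff_eq_star_mul_self.1 hX.isStrictlyPositive
  exact ⟨C, hC, by rw [h, star_eq_conjTranspose, conjTranspose_eq_transpose_of_trivial]⟩

theorem exists_isUnit_mul_mul_transpose_eq_smul_one (hX : X.PosDef) {θ : ℝ} (hθ : 0 < θ) :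
    ∃ C : Matrix n n ℝ, IsUnit C ∧ C * X * Cᵀ = θ • 1 ∧
      ∀ v, (C *ᵥ v) ⬝ᵥ (C *ᵥ v) = θ * (v ⬝ᵥ (X⁻¹ *ᵥ v)) := by
  obtain ⟨C, hC, h⟩ := exists_isUnit_eq_transpose_mul_self (hX.inv.smul hθ)
  refine ⟨C, hC, ?_, fun v ↦ ?_⟩
  · have hXC : X * Cᵀ * C = θ • 1 := by
      rw [Matrix.mul_assoc, ← h, Matrix.mul_smul,
        mul_nonsing_inv _ ((isUnit_iff_isUnit_det X).1 hX.isUnit)]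
    refine hC.mul_right_cancel ?_
    rw [Matrix.mul_assoc, Matrix.mul_assoc, ← Matrix.mul_assoc X, hXC, Matrix.mul_smul,
      Matrix.smul_mul, Matrix.mul_one, Matrix.one_mul]
  · rw [dotProduct_mulVec, vecMul_mulVec, ← dotProduct_mulVec, ← h, smul_mulVec, dotProduct_smul,
      smul_eq_mul]

theorem mul_mul_transpose_le_iff {A B C : Matrix n n ℝ} (hC : IsUnit C) :
    C * A * Cᵀ ≤ C * B * Cᵀ ↔ A ≤ B := by
  rw [Matrix.le_iff, Matrix.le_iff, ← Matrix.sub_mul, ← Matrix.mul_sub]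
  exact hC.posSemidef_star_right_conjugate_iff

variable {ι : Type*} [Fintype ι] {P : ι → Type*} [∀ i, Fintype (P i)]

theorem exists_choice_smul_fracSum_le [Nonempty n] {v : (i : ι) → P i → n → ℝ}
    {x : (i : ι) → P i → ℝ} (hx : ∀ i, x i ∈ stdSimplex ℝ (P i)) (hX : (fracSum v x).PosDef)
    {η θ : ℝ} (hη : 0 ≤ η) (hθ : 0 < θ)
    (hv : ∀ i j, 0 < x i j → x i j < 1 → v i j ⬝ᵥ ((fracSum v x)⁻¹ *ᵥ v i j) ≤ η) :
    ∃ σ : (i : ι) → P i, (1 - 2 * (θ * η) - Real.log (Fintype.card n) / θ) • fracSum v x ≤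
      ∑ i, vecMulVec (v i (σ i)) (v i (σ i)) := by
  obtain ⟨C, hC, hCX, hnorm⟩ := exists_isUnit_mul_mul_transpose_eq_smul_one hX hθ
  obtain ⟨σ, hσ⟩ := exists_choice_smul_one_le (w := fun i j ↦ C *ᵥ v i j) (r := θ * η) (θ := θ) hx
    (by positivity)
    (fun i j h0 h1 ↦ (hnorm _).trans_le (mul_le_mul_of_nonneg_left (hv i j h0 h1) hθ.le)) (by
      simp only [← hCX, fracSum, vecMulVec_mulVec_self, Matrix.mul_sum, Matrix.sum_mul,
        Matrix.mul_smul, Matrix.smul_mul])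
  refine ⟨σ, (mul_mul_transpose_le_iff hC).1 ?_⟩
  rw [Matrix.mul_smul, Matrix.smul_mul, hCX, smul_smul, Matrix.mul_sum, Matrix.sum_mul]
  simp only [vecMulVec_mulVec_self] at hσ
  rwa [sub_mul _ _ θ, div_mul_cancel₀ _ hθ.ne']

theorem exists_choice_one_sub_smul_fracSum_le [Nontrivial n] {v : (i : ι) → P i → n → ℝ}
    {x : (i : ι) → P i → ℝ} (hx : ∀ i, x i ∈ stdSimplex ℝ (P i)) (hX : (fracSum v x).PosDef)
    {ε : ℝ} (hε : 0 < ε)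
    (hv : ∀ i j, 0 < x i j → x i j < 1 → v i j ⬝ᵥ ((fracSum v x)⁻¹ *ᵥ v i j) ≤
      ε ^ 2 / (10 * Real.log (Fintype.card n))) :
    ∃ σ : (i : ι) → P i, (1 - ε) • fracSum v x ≤ ∑ i, vecMulVec (v i (σ i)) (v i (σ i)) := by
  have hlog : 0 < Real.log (Fintype.card n) :=
    Real.log_pos (by exact_mod_cast Fintype.one_lt_card (α := n))
  obtain ⟨σ, hσ⟩ := exists_choice_smul_fracSum_le (θ := 2 * Real.log (Fintype.card n) / ε) hx hX
    (by positivity) (by positivity) hv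
  refine ⟨σ, (smul_le_smul_of_nonneg_right ?_ (nonneg_iff_posSemidef.2 hX.posSemidef)).trans hσ⟩
  have hloss : 2 * (2 * Real.log (Fintype.card n) / ε *
      (ε ^ 2 / (10 * Real.log (Fintype.card n)))) + Real.log (Fintype.card n) /
      (2 * Real.log (Fintype.card n) / ε) = 9 / 10 * ε := by
    field_simp; norm_num
  linarith

end Whitening

section Leverage

variable {n R ι : Type*} [CommRing R]

/-- The matrix `A_S = ∑_{i ∈ S} uᵢuᵢᵀ`. -/
def outerSum (u : ι → n → R) (S : Finset ι) : Matrix n n R :=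
  ∑ i ∈ S, vecMulVec (u i) (u i)

variable [Fintype n] [DecidableEq n]

/-- The leverage score `uᵢᵀ A_S⁻¹ uᵢ` with respect to `S`, which need not contain `i`. It is the
junk value `0` when `A_S` is singular. -/
noncomputable def leverage (u : ι → n → R) (S : Finset ι) (i : ι) : R :=
  u i ⬝ᵥ ((outerSum u S)⁻¹ *ᵥ u i)

theorem det_add_vecMulVec {M : Matrix n n R} (hM : IsUnit M.det) (v w : n → R) :
    (M + vecMulVec v w).det = M.det * (1 + w ⬝ᵥ (M⁻¹ *ᵥ v)) := by
  rw [vecMulVec_eq Unit, det_add_replicateCol_mul_replicateRow hM, Matrix.mul_assoc,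
    ← replicateCol_mulVec, det_unique (n := Unit), Matrix.add_apply, one_apply_eq]
  rfl

theorem sum_leverage (u : ι → n → R) {S : Finset ι} (hS : IsUnit (outerSum u S).det) :
    ∑ i ∈ S, leverage u S i = Fintype.card n := by
  calc ∑ i ∈ S, leverage u S i = trace ((outerSum u S) * (outerSum u S)⁻¹) := by
        conv_rhs => rw [outerSum, Matrix.sum_mul, trace_sum]
        simp_rw [trace_vecMulVec_mul]
        rfl
    _ = Fintype.card n := by rw [mul_nonsing_inv _ hS, trace_one]

variable [DecidableEq ι]

theorem det_outerSum_erase (u : ι → n → R) {S : Finset ι} (hS : IsUnit (outerSum u S).det) {i : ι}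
    (hi : i ∈ S) :
    (outerSum u (S.erase i)).det = (outerSum u S).det * (1 - leverage u S i) := by
  have h : outerSum u (S.erase i) = outerSum u S + vecMulVec (-u i) (u i) := by
    rw [outerSum, outerSum, Finset.sum_erase_eq_sub hi, neg_vecMulVec, sub_eq_add_neg]
  rw [h, det_add_vecMulVec hS, mulVec_neg, dotProduct_neg, ← sub_eq_add_neg, leverage]

theorem det_outerSum_insert (u : ι → n → R) {S : Finset ι} (hS : IsUnit (outerSum u S).det) {i : ι}
    (hi : i ∉ S) :
    (outerSum u (insert i S)).det = (outerSum u S).det * (1 + leverage u S i) := by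
  have h : outerSum u (insert i S) = outerSum u S + vecMulVec (u i) (u i) := by
    rw [outerSum, outerSum, Finset.sum_insert hi, add_comm]
  rw [h, det_add_vecMulVec hS, leverage]

theorem one_add_leverage_mul_one_sub_leverage_insert (u : ι → n → R) {S : Finset ι} {i : ι}
    (hi : i ∉ S) (hS : IsUnit (outerSum u S).det) (hiS : IsUnit (outerSum u (insert i S)).det) :
    (1 + leverage u S i) * (1 - leverage u (insert i S) i) = 1 := by
  have h := det_outerSum_erase u hiS (Finset.mem_insert_self i S)
  rw [Finset.erase_insert hi, det_outerSum_insert u hS hi, mul_assoc] at h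
  exact hS.mul_left_cancel (h.symm.trans (mul_one _).symm)

end Leverage

section MaxDet

variable {n ι : Type*}

theorem posSemidef_outerSum [Finite n] (u : ι → n → ℝ) (S : Finset ι) : (outerSum u S).PosSemidef :=
  posSemidef_sum S fun i _ ↦ posSemidef_vecMulVec_self_star (u i)

variable [Fintype n] [DecidableEq n] {u : ι → n → ℝ}

theorem leverage_nonneg (u : ι → n → ℝ) (S : Finset ι) (i : ι) : 0 ≤ leverage u S i := by
  simpa [leverage] using (posSemidef_outerSum u S).inv.dotProduct_mulVec_nonneg (u i)

theorem exists_leverage_lt_one {S : Finset ι} (hS : 0 < (outerSum u S).det)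
    (hcard : Fintype.card n < S.card) : ∃ i ∈ S, leverage u S i < 1 := by
  refine Finset.exists_lt_of_sum_lt ?_
  rw [sum_leverage u hS.ne'.isUnit]
  simpa using hcard

theorem exists_subset_card_eq_det_outerSum_pos {T : Finset ι} (hT : 0 < (outerSum u T).det) {s : ℕ}
    (hs : Fintype.card n ≤ s) (hsT : s ≤ T.card) :
    ∃ S ⊆ T, S.card = s ∧ 0 < (outerSum u S).det := by
  classical
  induction T using Finset.strongInduction with
  | H T ih =>
    rcases hsT.eq_or_lt with rfl | hlt
    · exact ⟨T, subset_rfl, rfl, hT⟩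
    obtain ⟨i, hi, hlev⟩ := exists_leverage_lt_one hT (hs.trans_lt hlt)
    have hpos : 0 < (outerSum u (T.erase i)).det := by
      rw [det_outerSum_erase u hT.ne'.isUnit hi]
      exact mul_pos hT (sub_pos.2 hlev)
    obtain ⟨S, hST, h⟩ := ih _ (Finset.erase_ssubset hi) hpos
      (by rw [Finset.card_erase_of_mem hi]; omega)
    exact ⟨S, hST.trans (Finset.erase_subset i T), h⟩

theorem exists_isMaxOn_det_outerSum {T : Finset ι} (hT : 0 < (outerSum u T).det) {s : ℕ}
    (hs : Fintype.card n ≤ s) (hsT : s ≤ T.card) :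
    ∃ S ⊆ T, S.card = s ∧ 0 < (outerSum u S).det ∧
      ∀ S' ⊆ T, S'.card = s → (outerSum u S').det ≤ (outerSum u S).det := by
  obtain ⟨S₀, hS₀T, hS₀, hpos⟩ := exists_subset_card_eq_det_outerSum_pos hT hs hsT
  obtain ⟨S, hS, hmax⟩ := (T.powersetCard s).exists_max_image (fun S ↦ (outerSum u S).det)
    ⟨S₀, Finset.mem_powersetCard.2 ⟨hS₀T, hS₀⟩⟩
  rw [Finset.mem_powersetCard] at hS
  have hmax' (S') (hS'T : S' ⊆ T) (hS' : S'.card = s) :=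
    hmax S' (Finset.mem_powersetCard.2 ⟨hS'T, hS'⟩)
  exact ⟨S, hS.1, hS.2, hpos.trans_le (hmax' S₀ hS₀T hS₀), hmax'⟩

theorem det_outerSum_insert_pos [DecidableEq ι] {S : Finset ι} (hS : 0 < (outerSum u S).det)
    {j : ι} (hj : j ∉ S) : 0 < (outerSum u (insert j S)).det := by
  rw [det_outerSum_insert u hS.ne'.isUnit hj]
  exact mul_pos hS (by linarith [leverage_nonneg u S j])

-- By maximality `j` has the smallest leverage in `insert j S`, where the leverages sum to `card n`.
theorem card_add_one_mul_leverage_insert_le [DecidableEq ι] {S : Finset ι}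
    (hS : 0 < (outerSum u S).det) {j : ι} (hj : j ∉ S)
    (hmax : ∀ i ∈ insert j S, (outerSum u ((insert j S).erase i)).det ≤ (outerSum u S).det) :
    (S.card + 1) * leverage u (insert j S) j ≤ Fintype.card n := by
  have hpos := det_outerSum_insert_pos hS hj
  have hmin : ∀ i ∈ insert j S, leverage u (insert j S) j ≤ leverage u (insert j S) i := by
    intro i hi
    have hle := hmax i hi
    rw [← Finset.erase_insert hj, det_outerSum_erase u hpos.ne'.isUnit (by simp),
      Finset.insert_erase (by simp), det_outerSum_erase u hpos.ne'.isUnit hi] at hle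
    linarith [le_of_mul_le_mul_left hle hpos]
  have hsum := Finset.card_nsmul_le_sum _ _ _ hmin
  rwa [sum_leverage u hpos.ne'.isUnit, Finset.card_insert_of_notMem hj, nsmul_eq_mul,
    Nat.cast_add_one] at hsum

theorem card_add_one_sub_mul_leverage_le [DecidableEq ι] {S : Finset ι}
    (hS : 0 < (outerSum u S).det) {j : ι} (hj : j ∉ S)
    (hmax : ∀ i ∈ insert j S, (outerSum u ((insert j S).erase i)).det ≤ (outerSum u S).det) :
    (S.card + 1 - Fintype.card n) * leverage u S j ≤ Fintype.card n := by
  have hle := mul_le_mul_of_nonneg_left (card_add_one_mul_leverage_insert_le hS hj hmax)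
    (by linarith [leverage_nonneg u S j] : 0 ≤ 1 + leverage u S j)
  have hone := one_add_leverage_mul_one_sub_leverage_insert u hj hS.ne'.isUnit
    (det_outerSum_insert_pos hS hj).ne'.isUnit
  have hinsert : (1 + leverage u S j) * leverage u (insert j S) j = leverage u S j := by linarith
  rw [mul_left_comm, hinsert] at hle
  linarith

theorem exists_subset_leverage_le {T : Finset ι} (hT : 0 < (outerSum u T).det) {η : ℝ}
    (hη : 0 < η) :
    ∃ S ⊆ T, (S.card : ℝ) ≤ Fintype.card n / η + Fintype.card n ∧ 0 < (outerSum u S).det ∧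
      ∀ j ∈ T, j ∉ S → leverage u S j ≤ η := by
  classical
  obtain ⟨s, hs⟩ : ∃ s, s = ⌊(Fintype.card n : ℝ) / η⌋₊ + Fintype.card n := ⟨_, rfl⟩
  have hle : (s : ℝ) ≤ Fintype.card n / η + Fintype.card n := by
    rw [hs, Nat.cast_add]
    gcongr
    exact Nat.floor_le (by positivity)
  rcases le_total T.card s with hTs | hsT
  · exact ⟨T, subset_rfl, (Nat.cast_le.2 hTs).trans hle, hT, fun j hj hj' ↦ absurd hj hj'⟩
  obtain ⟨S, hST, hcard, hS, hmax⟩ := exists_isMaxOn_det_outerSum hT (hs ▸ Nat.le_add_left _ _) hsT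
  refine ⟨S, hST, by rwa [hcard], hS, fun j hjT hj ↦ ?_⟩
  have hlev := card_add_one_sub_mul_leverage_le hS hj fun i hi ↦ hmax _
    ((Finset.erase_subset _ _).trans (Finset.insert_subset hjT hST))
    (by rw [Finset.card_erase_of_mem hi, Finset.card_insert_of_notMem hj, hcard]; rfl)
  have hfloor := Nat.lt_floor_add_one ((Fintype.card n : ℝ) / η)
  rw [div_lt_iff₀ hη] at hfloor
  rw [hcard, hs, Nat.cast_add, add_right_comm, add_sub_cancel_right] at hlev
  exact le_of_mul_le_mul_left (hlev.trans hfloor.le) (by positivity)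

end MaxDet

section LambdaMin

variable {d : ℕ} [NeZero d] {A B : Matrix (Fin d) (Fin d) ℝ}

theorem lambdaMin_eq_iInf_eigenvalues (hA : A.IsHermitian) :
    lambdaMin A = ⨅ i, hA.eigenvalues i := by
  have h : {c : ℝ | (A - c • 1).PosSemidef} = Set.Iic (⨅ i, hA.eigenvalues i) := by
    ext c
    rw [Set.mem_ofPred_eq, ← Matrix.le_iff, smul_one_le_iff_le_eigenvalues hA, Set.mem_Iic,
      le_ciInf_iff (Set.finite_range _).bddBelow]
  rw [lambdaMin, h, csSup_Iic]

theorem le_lambdaMin_iff (hA : A.IsHermitian) {c : ℝ} : c ≤ lambdaMin A ↔ c • 1 ≤ A := by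
  rw [lambdaMin_eq_iInf_eigenvalues hA, le_ciInf_iff (Set.finite_range _).bddBelow,
    smul_one_le_iff_le_eigenvalues hA]

theorem mul_lambdaMin_le_lambdaMin_s11 (hA : A.IsHermitian) (hB : B.IsHermitian) {c : ℝ} (hc : 0 ≤ c)
    (h : c • A ≤ B) : c * lambdaMin A ≤ lambdaMin B := by
  rw [le_lambdaMin_iff hB, mul_smul]
  exact (smul_le_smul_of_nonneg_left ((le_lambdaMin_iff hA).1 le_rfl) hc).trans h

theorem posDef_of_lambdaMin_pos (hA : A.IsHermitian) (h : 0 < lambdaMin A) : A.PosDef := by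
  simpa using PosDef.posSemidef_add (Matrix.le_iff.1 ((le_lambdaMin_iff hA).1 le_rfl))
    (PosDef.one.smul h)

end LambdaMin

theorem inv_le_inv_of_posDef {n : Type*} [Fintype n] [DecidableEq n] {A B : Matrix n n ℝ}
    (hA : A.PosDef) (hAB : A ≤ B) : B⁻¹ ≤ A⁻¹ := by
  have hB : B.PosDef := by simpa using hA.add_posSemidef (Matrix.le_iff.1 hAB)
  have hAA : A⁻¹ * A = 1 := nonsing_inv_mul _ hA.det_pos.ne'.isUnit
  have hAA' : A * A⁻¹ = 1 := mul_nonsing_inv _ hA.det_pos.ne'.isUnit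
  have hBB : B⁻¹ * B = 1 := nonsing_inv_mul _ hB.det_pos.ne'.isUnit
  have hdecomp : A⁻¹ - B⁻¹ = (A⁻¹ - B⁻¹) * A * (A⁻¹ - B⁻¹)ᴴ + B⁻¹ * (B - A) * B⁻¹ᴴ := by
    rw [conjTranspose_sub, hA.isHermitian.inv.eq, hB.isHermitian.inv.eq]
    simp only [Matrix.sub_mul, Matrix.mul_sub, hAA, hBB, Matrix.one_mul, Matrix.mul_assoc, hAA',
      Matrix.mul_one]
    abel
  rw [Matrix.le_iff, hdecomp]
  exact (hA.posSemidef.mul_mul_conjTranspose_same _).add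
    ((Matrix.le_iff.1 hAB).mul_mul_conjTranspose_same _)

section ConvexProgram

variable {ι n : Type*} [Fintype n] [DecidableEq n] {P : ι → Type*} [∀ i, Fintype (P i)]

/-- The constraints of the convex program `CP(S)`, with leverage threshold `η`. The ground set is
the sigma type `(i : ι) × P i`. -/
structure IsFeasible (v : (i : ι) → P i → n → ℝ) (η : ℝ) (S : Finset ((i : ι) × P i))
    (x : (i : ι) → P i → ℝ) : Prop where
  mem_stdSimplex : ∀ i, x i ∈ stdSimplex ℝ (P i)
  eq_one : ∀ p ∈ S, x p.1 p.2 = 1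
  eq_zero : ∀ p ∉ S, η < leverage (Sigma.uncurry v) S p → x p.1 p.2 = 0

variable {v : (i : ι) → P i → n → ℝ} {η : ℝ} {S : Finset ((i : ι) × P i)} {x : (i : ι) → P i → ℝ}

theorem isFeasible_single [∀ i, DecidableEq (P i)] {τ : (i : ι) → P i} (hS : ∀ p ∈ S, p.2 = τ p.1)
    (hτ : ∀ i, ⟨i, τ i⟩ ∉ S → leverage (Sigma.uncurry v) S ⟨i, τ i⟩ ≤ η) :
    IsFeasible v η S fun i ↦ Pi.single (τ i) 1 where
  mem_stdSimplex i := single_mem_stdSimplex ℝ (τ i)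
  eq_one p hp := by rw [hS p hp, Pi.single_eq_same]
  eq_zero := by
    rintro ⟨i, j⟩ hp hlt
    refine Pi.single_eq_of_ne (fun hj : j = τ i ↦ ?_) 1
    subst hj
    exact (hτ i hp).not_gt hlt

variable [Fintype ι]

theorem IsFeasible.outerSum_le_fracSum (hx : IsFeasible v η S x) :
    outerSum (Sigma.uncurry v) S ≤ fracSum v x := by
  calc outerSum (Sigma.uncurry v) S
      = ∑ p ∈ S, x p.1 p.2 • vecMulVec (v p.1 p.2) (v p.1 p.2) :=
        Finset.sum_congr rfl fun p hp ↦ by rw [hx.eq_one p hp, one_smul, Sigma.uncurry]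
    _ ≤ ∑ p : (i : ι) × P i, x p.1 p.2 • vecMulVec (v p.1 p.2) (v p.1 p.2) :=
        Finset.sum_le_sum_of_subset_of_nonneg S.subset_univ fun p _ _ ↦
          smul_nonneg ((hx.mem_stdSimplex p.1).1 p.2)
            (nonneg_iff_posSemidef.2 (posSemidef_vecMulVec_self_star _))
    _ = fracSum v x := Fintype.sum_sigma' fun i j ↦ x i j • vecMulVec (v i j) (v i j)

theorem IsFeasible.posDef_fracSum (hx : IsFeasible v η S x)
    (hS : (outerSum (Sigma.uncurry v) S).PosDef) : (fracSum v x).PosDef := by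
  simpa using hS.add_posSemidef (Matrix.le_iff.1 hx.outerSum_le_fracSum)

theorem IsFeasible.dotProduct_inv_fracSum_mulVec_le (hx : IsFeasible v η S x)
    (hS : (outerSum (Sigma.uncurry v) S).PosDef) {i : ι} {j : P i} (h0 : 0 < x i j)
    (h1 : x i j < 1) : v i j ⬝ᵥ ((fracSum v x)⁻¹ *ᵥ v i j) ≤ η := by
  have hlev : leverage (Sigma.uncurry v) S ⟨i, j⟩ ≤ η := by
    by_contra! hlt
    exact h0.ne' (hx.eq_zero ⟨i, j⟩ (fun hmem ↦ h1.ne (hx.eq_one _ hmem)) hlt)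
  have hinv := Matrix.le_iff.1 (inv_le_inv_of_posDef hS hx.outerSum_le_fracSum)
  have hsub := hinv.dotProduct_mulVec_nonneg (v i j)
  rw [star_trivial, sub_mulVec, dotProduct_sub, sub_nonneg] at hsub
  exact hsub.trans hlev

end ConvexProgram

section GoodGuess

variable {d k : ℕ} {P : Fin k → Type*} [∀ i, Fintype (P i)] {v : (i : Fin k) → P i → Fin d → ℝ}
  {ε : ℝ} {S : Finset ((i : Fin k) × P i)}

theorem CPval_eq_sSup_image (v : (i : Fin k) → P i → Fin d → ℝ) (ε : ℝ)
    (S : Finset ((i : Fin k) × P i)) :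
    CPval v ε S = sSup ((fun x ↦ lambdaMin (fracSum v x)) ''
      {x | IsFeasible v (ε ^ 2 / (10 * Real.log d)) S x}) := by
  refine congrArg sSup (Set.ext fun r ↦ ⟨?_, ?_⟩)
  · rintro ⟨x, h0, hsum, hone, hzero, rfl⟩
    exact ⟨x, ⟨fun i ↦ ⟨h0 i, hsum i⟩, hone, hzero⟩, rfl⟩
  · rintro ⟨x, hx, rfl⟩
    exact ⟨x, fun i ↦ (hx.mem_stdSimplex i).1, fun i ↦ (hx.mem_stdSimplex i).2, hx.eq_one,
      hx.eq_zero, rfl⟩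

theorem exists_choice_one_sub_mul_lambdaMin_le (hd : 2 ≤ d) (hε0 : 0 < ε) (hε1 : ε < 1)
    (hS : (outerSum (Sigma.uncurry v) S).PosDef) {x : (i : Fin k) → P i → ℝ}
    (hx : IsFeasible v (ε ^ 2 / (10 * Real.log d)) S x) :
    ∃ σ : (i : Fin k) → P i, (1 - ε) * lambdaMin (fracSum v x) ≤
      lambdaMin (∑ i, vecMulVec (v i (σ i)) (v i (σ i))) := by
  have : NeZero d := ⟨by omega⟩
  have : Nontrivial (Fin d) := Fin.nontrivial_iff_two_le.2 hd
  obtain ⟨σ, hσ⟩ := exists_choice_one_sub_smul_fracSum_le hx.mem_stdSimplex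
    (hx.posDef_fracSum hS) hε0 fun i j h0 h1 ↦ by
      simpa using hx.dotProduct_inv_fracSum_mulVec_le hS h0 h1
  exact ⟨σ, mul_lambdaMin_le_lambdaMin_s11 (isHermitian_fracSum v x)
    (isHermitian_sum_vecMulVec_self _ _) (by linarith) hσ⟩

theorem exists_small_subset_isFeasible_single [∀ i, DecidableEq (P i)] (τ : (i : Fin k) → P i)
    (hτ : (∑ i, vecMulVec (v i (τ i)) (v i (τ i))).PosDef) {η : ℝ} (hη : 0 < η) :
    ∃ S : Finset ((i : Fin k) × P i), (S.card : ℝ) ≤ d / η + d ∧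
      (outerSum (Sigma.uncurry v) S).PosDef ∧ IsFeasible v η S fun i ↦ Pi.single (τ i) 1 := by
  have hT : outerSum (Sigma.uncurry v) (Finset.univ.sigma fun i ↦ {τ i}) =
      ∑ i, vecMulVec (v i (τ i)) (v i (τ i)) := by
    simp [outerSum, Finset.sum_sigma, Sigma.uncurry]
  obtain ⟨S, hST, hcard, hS, hlev⟩ := exists_subset_leverage_le (hT ▸ hτ.det_pos) hη
  rw [Fintype.card_fin] at hcard
  exact ⟨S, hcard, (posSemidef_outerSum _ S).posDef_iff_det_ne_zero.2 hS.ne',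
    isFeasible_single (fun p hp ↦ by simpa using hST hp) fun i hi ↦ hlev _ (by simp) hi⟩

end GoodGuess

/-- if `OPT > 0` is the maximum of `λ_min(∑ᵢ v_{iσ(i)}v_{iσ(i)}ᵀ)` over choice
functions `σ`, then there is a set `S` of at most `10 d ln d/ε² + d` index pairs such that
`A_S` is invertible and `OPT ≤ CP(S) ≤ OPT/(1−ε)`. -/
theorem exists_good_guess {d k : ℕ} (hd : 2 ≤ d) {ε : ℝ} (hε0 : 0 < ε) (hε1 : ε < 1)
    {P : Fin k → Type*} [∀ i, Fintype (P i)] [∀ i, DecidableEq (P i)]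
    (v : (i : Fin k) → P i → Fin d → ℝ)
    (OPT : ℝ)
    (hOPT : IsGreatest {r : ℝ | ∃ σ : (i : Fin k) → P i,
      r = lambdaMin (∑ i, vecMulVec (v i (σ i)) (v i (σ i)))} OPT)
    (hpos : 0 < OPT) :
    ∃ S : Finset ((i : Fin k) × P i),
      (S.card : ℝ) ≤ 10 * d * Real.log d / ε ^ 2 + d ∧
      IsUnit (∑ p ∈ S, vecMulVec (v p.1 p.2) (v p.1 p.2)).det ∧
      OPT ≤ CPval v ε S ∧ CPval v ε S ≤ OPT / (1 - ε) := by
  have : NeZero d := ⟨by omega⟩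
  have hlog : 0 < Real.log d := Real.log_pos (by exact_mod_cast hd)
  obtain ⟨⟨τ, rfl⟩, hmax⟩ := hOPT
  have hτ := posDef_of_lambdaMin_pos (isHermitian_sum_vecMulVec_self _ _) hpos
  obtain ⟨S, hcard, hS, hfeas⟩ := exists_small_subset_isFeasible_single τ hτ
    (by positivity : 0 < ε ^ 2 / (10 * Real.log d))
  have hτmem : lambdaMin (∑ i, vecMulVec (v i (τ i)) (v i (τ i))) ∈
      (fun x ↦ lambdaMin (fracSum v x)) ''
        {x | IsFeasible v (ε ^ 2 / (10 * Real.log d)) S x} :=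
    ⟨_, hfeas, congrArg lambdaMin (fracSum_single v τ)⟩
  have hupper : ∀ r ∈ (fun x ↦ lambdaMin (fracSum v x)) ''
      {x | IsFeasible v (ε ^ 2 / (10 * Real.log d)) S x},
      r ≤ lambdaMin (∑ i, vecMulVec (v i (τ i)) (v i (τ i))) / (1 - ε) := by
    rintro _ ⟨x, hx, rfl⟩
    obtain ⟨σ, hσ⟩ := exists_choice_one_sub_mul_lambdaMin_le hd hε0 hε1 hS hx
    rw [le_div_iff₀' (sub_pos.2 hε1)]
    exact hσ.trans (hmax ⟨σ, rfl⟩)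
  refine ⟨S, hcard.trans_eq (by field_simp), hS.det_pos.ne'.isUnit, ?_, ?_⟩ <;>
    rw [CPval_eq_sSup_image]
  · exact le_csSup ⟨_, hupper⟩ hτmem
  · exact csSup_le ⟨_, hτmem⟩ hupper
end

section
/- Let L be a symmetric d×d real matrix, let C₁, C₂ be positive definite d×d real matrices, and let K₁, K₂ be positive semidefinite d×d real matrices. Then there exists η > 0 such that the function z ↦ tr exp(L + log(C₁ + z·K₁) + log(C₂ − z·K₂)) is concave on the interval (−η, η). -/
open Matrix

/-- Apply a real function to a symmetric real matrix through its spectral decomposition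
(junk value `0` for non-Hermitian input). -/
noncomputable def matFun {d : ℕ} (f : ℝ → ℝ) (A : Matrix (Fin d) (Fin d) ℝ) :
    Matrix (Fin d) (Fin d) ℝ :=
  if hA : A.IsHermitian then
    (hA.eigenvectorUnitary : Matrix (Fin d) (Fin d) ℝ) *
      Matrix.diagonal (fun i => f (hA.eigenvalues i)) *
      star (hA.eigenvectorUnitary : Matrix (Fin d) (Fin d) ℝ)
  else 0

/-- The matrix exponential of a symmetric real matrix. -/
noncomputable def matExp {d : ℕ} : Matrix (Fin d) (Fin d) ℝ → Matrix (Fin d) (Fin d) ℝ :=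
  matFun Real.exp

/-- The matrix logarithm of a positive definite real matrix. -/
noncomputable def matLog {d : ℕ} : Matrix (Fin d) (Fin d) ℝ → Matrix (Fin d) (Fin d) ℝ :=
  matFun Real.log

/-!
The logarithm `log a = ∫₀¹ (a - 1) (1 + s (a - 1))⁻¹ ds` is holomorphic, so the trace function
extends to a holomorphic `F` on the upper half-plane. Rotating `C₁ + z K₁` back by `arg z` shows
that `log (C₁ + z K₁)` has imaginary part between `0` and `arg z`; likewise that of
`log (C₂ - z K₂)` lies between `arg z - π` and `0`. The eigenvalues of the exponent therefore have
imaginary part in `[arg z - π, arg z]`, and summing `exp` over them gives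
`Im (F z / z) ≤ 0`. Thus `-F z / z` is a Pick function, with a simple pole at `0` of residue
`-F 0`; by Julia's lemma removing that pole preserves the sign, so `Im ((F z - F 0) / z) ≤ 0`.
Translating, `Im ((F z - F x) / (z - x)) ≤ 0` for every real `x`, and the Cauchy–Riemann equations
make the difference quotients of `F` at `x` decreasing along the real axis, which is concavity.
-/

section ParametricIntegral
open Set Filter Topology

theorem hasFDerivAt_intervalIntegral_of_eventually {𝕜 H E : Type*} [RCLike 𝕜]
    [NormedAddCommGroup H] [NormedSpace 𝕜 H] [NormedAddCommGroup E] [NormedSpace ℝ E]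
    [NormedSpace 𝕜 E] {F : H → ℝ → E} {F' : H → ℝ → H →L[𝕜] E} {a b : ℝ} {x₀ : H}
    (hF : ∀ s ∈ uIcc a b, ∀ᶠ p : H × ℝ in 𝓝 (x₀, s), ContinuousAt (F p.1) p.2)
    (hF' : ∀ s ∈ uIcc a b, ContinuousAt (Function.uncurry F') (x₀, s))
    (hd : ∀ s ∈ uIcc a b, ∀ᶠ p : H × ℝ in 𝓝 (x₀, s),
      HasFDerivAt (F · p.2) (F' p.1 p.2) p.1) :
    HasFDerivAt (fun x => ∫ s in a..b, F x s) (∫ s in a..b, F' x₀ s) x₀ := by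
  have hF'c : ContinuousOn (F' x₀) (uIcc a b) := fun s hs =>
    (ContinuousAt.comp (f := fun s : ℝ => (x₀, s)) (hF' s hs) (by fun_prop)).continuousWithinAt
  obtain ⟨B, hB⟩ := isCompact_uIcc.exists_bound_of_continuousOn hF'c
  have hev : ∀ᶠ x in 𝓝 x₀, ∀ s ∈ uIcc a b, ContinuousAt (F x) s ∧
      HasFDerivAt (F · s) (F' x s) x ∧ ‖F' x s‖ < B + 1 := by
    refine isCompact_uIcc.eventually_forall_of_forall_eventually fun s hs => ?_
    have hlt : ‖Function.uncurry F' (x₀, s)‖ < B + 1 := (hB s hs).trans_lt (lt_add_one B)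
    exact (hF s hs).and ((hd s hs).and ((hF' s hs).norm.eventually_lt_const hlt))
  have hFc : ∀ x, (∀ s ∈ uIcc a b, ContinuousAt (F x) s ∧
      HasFDerivAt (F · s) (F' x s) x ∧ ‖F' x s‖ < B + 1) → ContinuousOn (F x) (uIcc a b) :=
    fun x hx s hs => (hx s hs).1.continuousWithinAt
  refine intervalIntegral.hasFDerivAt_integral_of_dominated_of_fderiv_le
    (bound := fun _ => B + 1) hev ?_ (hFc x₀ hev.self_of_nhds).intervalIntegrable ?_ ?_
    intervalIntegrable_const ?_
  · filter_upwards [hev] with x hx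
    exact ((hFc x hx).mono uIoc_subset_uIcc).aestronglyMeasurable measurableSet_uIoc
  · exact (hF'c.mono uIoc_subset_uIcc).aestronglyMeasurable measurableSet_uIoc
  · exact .of_forall fun t ht x hx => (hx t (uIoc_subset_uIcc ht)).2.2.le
  · exact .of_forall fun t ht x hx => (hx t (uIoc_subset_uIcc ht)).2.1

end ParametricIntegral

section SegmentLog
open Set Filter Topology
open scoped Ring

variable {𝔸 : Type*} [NormedRing 𝔸] [NormedAlgebra ℂ 𝔸]

/-- The principal logarithm in a complex Banach algebra, as the integral of `da * a⁻¹` along the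
segment from `1` to `a`; a junk value unless `SegmentUnit a`. -/
noncomputable def segmentLog (a : 𝔸) : 𝔸 :=
  ∫ s in (0 : ℝ)..1, (a - 1) * (1 + s • (a - 1))⁻¹ʳ

/-- The domain of `segmentLog`: the segment from `1` to `a` consists of units. -/
def SegmentUnit (a : 𝔸) : Prop :=
  ∀ s ∈ uIcc (0 : ℝ) 1, IsUnit (1 + s • (a - 1))

variable [CompleteSpace 𝔸]

theorem continuousAt_ringInverse_segment {a : 𝔸} {s : ℝ} (h : IsUnit (1 + s • (a - 1))) :
    ContinuousAt (fun p : 𝔸 × ℝ => (1 + p.2 • (p.1 - 1))⁻¹ʳ) (a, s) := by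
  have hinv : ContinuousAt Ring.inverse (1 + s • (a - 1)) :=
    h.unit_spec ▸ NormedRing.inverse_continuousAt h.unit
  exact ContinuousAt.comp (f := fun p : 𝔸 × ℝ => 1 + p.2 • (p.1 - 1)) (x := (a, s)) hinv
    (by fun_prop)

theorem SegmentUnit.continuousOn_ringInverse {a : 𝔸} (h : SegmentUnit a) :
    ContinuousOn (fun s : ℝ => (1 + s • (a - 1))⁻¹ʳ) (uIcc 0 1) := fun s hs =>
  (ContinuousAt.comp (f := fun s : ℝ => (a, s)) (continuousAt_ringInverse_segment (h s hs))
    (by fun_prop)).continuousWithinAt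

theorem SegmentUnit.intervalIntegrable {a : 𝔸} (h : SegmentUnit a) :
    IntervalIntegrable (fun s : ℝ => (a - 1) * (1 + s • (a - 1))⁻¹ʳ) MeasureTheory.volume 0 1 :=
  (continuousOn_const.mul h.continuousOn_ringInverse).intervalIntegrable

theorem hasFDerivAt_mul_ringInverse_segment {a : 𝔸} {s : ℝ} (h : IsUnit (1 + s • (a - 1))) :
    HasFDerivAt (fun x : 𝔸 => (x - 1) * (1 + s • (x - 1))⁻¹ʳ)
      (ContinuousLinearMap.mulLeftRight ℂ 𝔸 (1 + s • (a - 1))⁻¹ʳ (1 + s • (a - 1))⁻¹ʳ) a := by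
  have hsub : HasFDerivAt (fun x : 𝔸 => x - 1) (.id ℂ 𝔸) a := (hasFDerivAt_id a).sub_const 1
  have hinv : HasFDerivAt Ring.inverse _ (1 + s • (a - 1)) :=
    h.unit_spec ▸ hasFDerivAt_ringInverse (𝕜 := ℂ) h.unit
  refine (hsub.mul' (hinv.comp a ((hsub.const_smul s).const_add 1))).congr_fderiv ?_
  ext q
  rw [← Ring.inverse_unit, h.unit_spec]
  have hR := Ring.mul_inverse_cancel _ h
  simp only [Function.comp_apply]
  generalize (1 + s • (a - 1))⁻¹ʳ = R at hR
  rw [add_mul, one_mul, smul_mul_assoc] at hR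
  calc _ = q * R - s • ((a - 1) * R) * q * R := by simp [mul_assoc]; abel
    _ = R * q * R := by rw [eq_sub_of_add_eq' hR]; noncomm_ring

theorem hasFDerivAt_segmentLog {a : 𝔸} (h : SegmentUnit a) :
    HasFDerivAt segmentLog (∫ s in (0 : ℝ)..1, ContinuousLinearMap.mulLeftRight ℂ 𝔸
      (1 + s • (a - 1))⁻¹ʳ (1 + s • (a - 1))⁻¹ʳ) a := by
  have hunit : ∀ s ∈ uIcc (0 : ℝ) 1, ∀ᶠ p : 𝔸 × ℝ in 𝓝 (a, s),
      IsUnit (1 + p.2 • (p.1 - 1)) := fun s hs =>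
    (show Continuous fun p : 𝔸 × ℝ => 1 + p.2 • (p.1 - 1) by
      fun_prop).continuousAt.eventually (Units.isOpen.mem_nhds (h s hs))
  refine hasFDerivAt_intervalIntegral_of_eventually
    (F := fun x s => (x - 1) * (1 + s • (x - 1))⁻¹ʳ)
    (F' := fun x s => .mulLeftRight ℂ 𝔸 (1 + s • (x - 1))⁻¹ʳ (1 + s • (x - 1))⁻¹ʳ)
    (fun s hs => ?_) (fun s hs => ?_)
    fun s hs => (hunit s hs).mono fun p hp => hasFDerivAt_mul_ringInverse_segment hp
  · filter_upwards [hunit s hs] with p hp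
    exact continuousAt_const.mul <| ContinuousAt.comp (f := fun s : ℝ => (p.1, s))
      (continuousAt_ringInverse_segment hp) (by fun_prop)
  · have hR := continuousAt_ringInverse_segment (h s hs)
    exact ((ContinuousLinearMap.continuous _).continuousAt.comp hR).clm_apply hR

theorem integral_ringInverse_segment_mul_self {a : 𝔸} (h : SegmentUnit a) :
    ∫ s in (0 : ℝ)..1, (1 + s • (a - 1))⁻¹ʳ * (1 + s • (a - 1))⁻¹ʳ = a⁻¹ʳ := by
  have hderiv : ∀ s ∈ uIcc (0 : ℝ) 1, HasDerivAt (fun s : ℝ => s • (1 + s • (a - 1))⁻¹ʳ)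
      ((1 + s • (a - 1))⁻¹ʳ * (1 + s • (a - 1))⁻¹ʳ) s := by
    intro s hs
    have hsegment : HasDerivAt (fun s : ℝ => 1 + s • (a - 1)) (a - 1) s := by
      simpa using ((hasDerivAt_id s).smul_const (a - 1)).const_add 1
    have hinv : HasFDerivAt Ring.inverse _ (1 + s • (a - 1)) :=
      (h s hs).unit_spec ▸ hasFDerivAt_ringInverse (𝕜 := ℝ) (h s hs).unit
    refine ((hasDerivAt_id s).smul (hinv.comp_hasDerivAt s hsegment)).congr_deriv ?_
    rw [← Ring.inverse_unit, (h s hs).unit_spec]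
    have hR := Ring.mul_inverse_cancel _ (h s hs)
    simp only [Function.comp_apply, id]
    generalize (1 + s • (a - 1))⁻¹ʳ = R at hR
    rw [add_mul, one_mul, smul_mul_assoc] at hR
    calc _ = R - R * (s • ((a - 1) * R)) := by simp [mul_assoc]; abel
      _ = R * R := by rw [← sub_eq_of_eq_add' hR.symm]; noncomm_ring
  rw [intervalIntegral.integral_eq_sub_of_hasDerivAt hderiv
    (h.continuousOn_ringInverse.mul h.continuousOn_ringInverse).intervalIntegrable]
  simp

theorem integral_ringInverse_segment_mul_mul {a q : 𝔸} (h : SegmentUnit a) (hq : Commute q a) :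
    ∫ s in (0 : ℝ)..1, (1 + s • (a - 1))⁻¹ʳ * q * (1 + s • (a - 1))⁻¹ʳ = q * a⁻¹ʳ := by
  have hcont : ContinuousOn
      (fun s : ℝ => (1 + s • (a - 1))⁻¹ʳ * (1 + s • (a - 1))⁻¹ʳ) (uIcc 0 1) :=
    h.continuousOn_ringInverse.mul h.continuousOn_ringInverse
  rw [← integral_ringInverse_segment_mul_self h, ← ContinuousLinearMap.mul_apply' ℂ,
    ← ContinuousLinearMap.intervalIntegral_comp_comm _ hcont.intervalIntegrable]
  refine intervalIntegral.integral_congr fun s hs => ?_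
  have hcomm : Commute q (1 + s • (a - 1)) :=
    (Commute.one_right q).add_right ((hq.sub_right (Commute.one_right q)).smul_right s)
  obtain ⟨u, hu⟩ := h s hs
  rw [← hu] at hcomm
  simp only [← hu, Ring.inverse_unit, ContinuousLinearMap.mul_apply', ← mul_assoc,
    hcomm.units_inv_right.eq]

theorem hasDerivAt_segmentLog_smul {a : 𝔸} {z : ℂ} (hz : z ≠ 0) (h : SegmentUnit (z • a)) :
    HasDerivAt (fun w : ℂ => segmentLog (w • a)) (z⁻¹ • 1) z := by
  have hsmul : HasDerivAt (fun w : ℂ => w • a) a z := by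
    simpa using (hasDerivAt_id z).smul_const a
  refine ((hasFDerivAt_segmentLog h).comp_hasDerivAt z hsmul).congr_deriv ?_
  rw [ContinuousLinearMap.intervalIntegral_apply]
  · simp only [ContinuousLinearMap.mulLeftRight_apply]
    rw [integral_ringInverse_segment_mul_mul h ((Commute.refl a).smul_right z)]
    have hunit : IsUnit (z • a) := by simpa using h 1 (by simp)
    rw [eq_inv_smul_iff₀ hz, ← smul_mul_assoc, Ring.mul_inverse_cancel _ hunit]
  · exact ((ContinuousLinearMap.continuous _).comp_continuousOn h.continuousOn_ringInverse
      |>.clm_apply h.continuousOn_ringInverse).intervalIntegrable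

theorem segmentLog_eq_add_rotation (a : 𝔸) (φ : ℝ)
    (h : ∀ ψ ∈ uIcc 0 φ, SegmentUnit (Complex.exp (-(ψ * Complex.I)) • a)) :
    segmentLog a =
      (φ * Complex.I) • (1 : 𝔸) + segmentLog (Complex.exp (-(φ * Complex.I)) • a) := by
  have hderiv : ∀ ψ ∈ uIcc 0 φ, HasDerivAt (fun ψ : ℝ => (ψ * Complex.I) • (1 : 𝔸) +
      segmentLog (Complex.exp (-(ψ * Complex.I)) • a)) 0 ψ := by
    intro ψ hψ
    have hangle : HasDerivAt (fun ψ : ℝ => (ψ * Complex.I : ℂ)) Complex.I ψ := by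
      simpa using (Complex.ofRealCLM.hasDerivAt (x := ψ)).mul_const Complex.I
    have hlog := (hasDerivAt_segmentLog_smul (Complex.exp_ne_zero _) (h ψ hψ)).scomp ψ
      hangle.neg.cexp
    refine ((hangle.smul_const (1 : 𝔸)).add hlog).congr_deriv ?_
    rw [smul_smul, ← add_smul, mul_comm (Complex.exp _), mul_assoc]
    simp
  have hconst := intervalIntegral.integral_eq_sub_of_hasDerivAt hderiv (by simp)
  rw [intervalIntegral.integral_zero] at hconst
  simpa using (sub_eq_zero.mp hconst.symm).symm

end SegmentLog

section ImaginaryPart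
open Set ComplexStarModule
open scoped Ring

variable {A : Type*} [CStarAlgebra A]

theorem continuous_imaginaryPart : Continuous fun a : A => (ℑ a : A) := by
  simp only [imaginaryPart_apply_coe]
  fun_prop

theorem imaginaryPart_intervalIntegral {f : ℝ → A} {a b : ℝ}
    (hf : IntervalIntegrable f MeasureTheory.volume a b) :
    (ℑ (∫ s in a..b, f s) : A) = ∫ s in a..b, (ℑ (f s) : A) :=
  (ContinuousLinearMap.intervalIntegral_comp_comm
    (⟨(selfAdjoint.submodule ℝ A).subtype ∘ₗ imaginaryPart, continuous_imaginaryPart⟩ :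
      A →L[ℝ] A) hf).symm

theorem imaginaryPart_mul_ringInverse_segment {a : A} {s : ℝ} (h : IsUnit (1 + s • (a - 1))) :
    (ℑ ((a - 1) * (1 + s • (a - 1))⁻¹ʳ) : A) =
      star (1 + s • (a - 1))⁻¹ʳ * ℑ a * (1 + s • (a - 1))⁻¹ʳ := by
  have hR := Ring.mul_inverse_cancel _ h
  generalize (1 + s • (a - 1))⁻¹ʳ = R at hR
  have hR' : star R * (1 + s • (star a - 1)) = 1 := by
    simpa using congrArg star hR
  have hsub : (a - 1) * R - star ((a - 1) * R) = star R * (a - star a) * R := by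
    calc _ = (star R * (1 + s • (star a - 1))) * ((a - 1) * R) -
          star R * (star a - 1) * ((1 + s • (a - 1)) * R) := by rw [hR', hR]; simp
      _ = _ := by
        simp only [smul_mul_assoc, mul_smul_comm, add_mul, mul_add, mul_assoc]
        noncomm_ring
  simp only [imaginaryPart_apply_coe, hsub, mul_smul_comm, smul_mul_assoc]

theorem imaginaryPart_segmentLog {a : A} (h : SegmentUnit a) :
    (ℑ (segmentLog a) : A) =
      ∫ s in (0 : ℝ)..1, star (1 + s • (a - 1))⁻¹ʳ * ℑ a * (1 + s • (a - 1))⁻¹ʳ := by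
  rw [segmentLog, imaginaryPart_intervalIntegral h.intervalIntegrable]
  exact intervalIntegral.integral_congr fun s hs => imaginaryPart_mul_ringInverse_segment (h s hs)

theorem coe_realPart_smul_add_smul {P Q : A} (hP : IsSelfAdjoint P)
    (hQ : IsSelfAdjoint Q) (u v : ℂ) :
    (ℜ (u • P + v • Q) : A) = u.re • P + v.re • Q := by
  rw [map_add, realPart_smul, realPart_smul]
  simp [hP.imaginaryPart, hQ.imaginaryPart, hP.coe_realPart, hQ.coe_realPart]

theorem coe_imaginaryPart_smul_add_smul {P Q : A} (hP : IsSelfAdjoint P)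
    (hQ : IsSelfAdjoint Q) (u v : ℂ) :
    (ℑ (u • P + v • Q) : A) = u.im • P + v.im • Q := by
  rw [map_add, imaginaryPart_smul, imaginaryPart_smul]
  simp [hP.imaginaryPart, hQ.imaginaryPart, hP.coe_realPart, hQ.coe_realPart]

theorem coe_imaginaryPart_rotation_add_smul {P Q : A} (hP : IsSelfAdjoint P)
    (hQ : IsSelfAdjoint Q) (z : ℂ) :
    (ℑ (Complex.exp (-(z.arg * Complex.I)) • (P + z • Q)) : A) = -Real.sin z.arg • P := by
  have hrot : Complex.exp (-(z.arg * Complex.I)) • (P + z • Q) =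
      Complex.exp ((-z.arg : ℝ) * Complex.I) • P + (‖z‖ : ℂ) • Q := by
    conv_lhs => rw [← Complex.norm_mul_exp_arg_mul_I z]
    rw [smul_add, smul_smul, mul_left_comm, ← Complex.exp_add]
    simp
  rw [hrot, coe_imaginaryPart_smul_add_smul hP hQ, Complex.exp_ofReal_mul_I_im]
  simp

variable [PartialOrder A] [StarOrderedRing A]

theorem isUnit_of_isStrictlyPositive_realPart {a : A} (h : IsStrictlyPositive (ℜ a : A)) :
    IsUnit a := by
  set u := CFC.sqrt (ℜ a : A)
  have hu : IsStrictlyPositive u := h.sqrt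
  have huu : u * u = ℜ a := CFC.sqrt_mul_sqrt_self _ h.nonneg
  obtain ⟨v, hv⟩ := hu.isUnit
  have hvs : star (↑v⁻¹ : A) = ↑v⁻¹ := by
    rw [← Ring.inverse_unit, ← Ring.inverse_star, hv, hu.isSelfAdjoint.star_eq]
  set c : A := ↑v⁻¹ * ℑ a * ↑v⁻¹
  have hc : IsSelfAdjoint c := by
    simpa only [hvs] using (ℑ a).prop.conjugate (↑v⁻¹ : A)
  have hIc : IsUnit (algebraMap ℂ A Complex.I - c) := spectrum.notMem_iff.mp fun hI => by
    simpa using hc.im_eq_zero_of_mem_spectrum hI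
  have hucu : u * c * u = ℑ a := by simp only [c, ← hv, Units.mul_inv_cancel_left, mul_assoc,
    Units.inv_mul, mul_one]
  have ha : a = (-Complex.I • u) * (algebraMap ℂ A Complex.I - c) * u := by
    rw [Algebra.algebraMap_eq_smul_one, mul_sub, sub_mul, smul_mul_smul_comm, smul_mul_assoc,
      smul_mul_assoc, mul_one, smul_mul_assoc, hucu, huu]
    simpa using (realPart_add_I_smul_imaginaryPart a).symm
  rw [ha]
  exact ((hu.isUnit.smul (Units.mk0 (-Complex.I) (by simp))).mul hIc).mul hu.isUnit

theorem segmentUnit_of_isStrictlyPositive_realPart_smul {a : A} {u : ℂ} (hu : 0 < u.re)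
    (h : IsStrictlyPositive (ℜ (u • a) : A)) : SegmentUnit a := by
  intro s hs
  rw [uIcc_of_le zero_le_one] at hs
  have hu0 : u ≠ 0 := by rintro rfl; simp at hu
  have hpos : IsStrictlyPositive (((1 - s) * u.re) • (1 : A) + s • (ℜ (u • a) : A)) := by
    rcases hs.1.eq_or_lt with rfl | hs0
    · simpa using isStrictlyPositive_one.smul hu
    · exact (h.smul hs0).nonneg_add
        (smul_nonneg (mul_nonneg (sub_nonneg.mpr hs.2) hu.le) zero_le_one)
  have hre : (ℜ (u • (1 + s • (a - 1))) : A) =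
      ((1 - s) * u.re) • (1 : A) + s • (ℜ (u • a) : A) := by
    have hcomb : u • (1 + s • (a - 1)) = (1 - s) • u • (1 : A) + s • u • a := by
      rw [smul_comm s u a, smul_comm (1 - s) u (1 : A), ← smul_add]
      congr 1
      module
    rw [hcomb, map_add, map_smul realPart (1 - s), map_smul realPart s, realPart_smul u 1]
    simp [mul_smul, (IsSelfAdjoint.one A).imaginaryPart]
  rw [← hre] at hpos
  exact (isUnit_smul_iff (Units.mk0 u hu0) _).mp (isUnit_of_isStrictlyPositive_realPart hpos)

theorem imaginaryPart_segmentLog_nonneg {a : A} (h : SegmentUnit a) (ha : 0 ≤ (ℑ a : A)) :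
    0 ≤ (ℑ (segmentLog a) : A) := by
  rw [imaginaryPart_segmentLog h, intervalIntegral.integral_of_le zero_le_one]
  exact MeasureTheory.integral_nonneg fun s => star_left_conjugate_nonneg ha _

theorem imaginaryPart_segmentLog_nonpos {a : A} (h : SegmentUnit a) (ha : (ℑ a : A) ≤ 0) :
    (ℑ (segmentLog a) : A) ≤ 0 := by
  rw [imaginaryPart_segmentLog h, intervalIntegral.integral_of_le zero_le_one]
  refine MeasureTheory.integral_nonpos fun s => ?_
  simpa using star_left_conjugate_le_conjugate ha (1 + s • (a - 1))⁻¹ʳ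

theorem im_le_of_mem_spectrum {a : A} {β : ℝ} (h : (ℑ a : A) ≤ β • 1) {z : ℂ}
    (hz : z ∈ spectrum ℂ a) : z.im ≤ β := by
  by_contra! hβ
  refine hz ?_
  have hre : (ℜ (-Complex.I • (algebraMap ℂ A z - a)) : A) =
      (z.im - β) • (1 : A) + (β • (1 : A) - ℑ a) := by
    rw [realPart_smul, map_sub imaginaryPart, Algebra.algebraMap_eq_smul_one,
      imaginaryPart_smul z 1]
    simp [sub_smul]
  have hpos := (isStrictlyPositive_one (A := A)).smul (sub_pos.mpr hβ) |>.add_nonneg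
    (sub_nonneg.mpr h)
  rw [← hre] at hpos
  exact (isUnit_smul_iff (Units.mk0 (-Complex.I) (by simp)) _).mp
    (isUnit_of_isStrictlyPositive_realPart hpos)

theorem le_im_of_mem_spectrum {a : A} {β : ℝ} (h : β • 1 ≤ (ℑ a : A)) {z : ℂ}
    (hz : z ∈ spectrum ℂ a) : β ≤ z.im := by
  have := im_le_of_mem_spectrum (a := -a) (β := -β) (by simpa using h) (z := -z)
    (by simpa [← spectrum.neg_eq] using hz)
  simpa using this

theorem segmentUnit_of_isStrictlyPositive {a : A} (h : IsStrictlyPositive a) : SegmentUnit a :=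
  segmentUnit_of_isStrictlyPositive_realPart_smul (u := 1) (by simp) <| by
    rwa [one_smul, h.isSelfAdjoint.coe_realPart]

section Pencil
variable {P Q : A} {z : ℂ}

-- Rotating `P + z • Q` by half of `-arg z` gives both coefficients the same positive real part.
theorem segmentUnit_rotation_add_smul (hP : IsStrictlyPositive P) (hQ : 0 ≤ Q)
    (hz : z ∈ Complex.slitPlane) {ψ : ℝ} (hψ : ψ ∈ uIcc 0 z.arg) :
    SegmentUnit (Complex.exp (-(ψ * Complex.I)) • (P + z • Q)) := by
  have hlt : z.arg < Real.pi :=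
    lt_of_le_of_ne z.arg_le_pi (Complex.mem_slitPlane_iff_arg.mp hz).1
  have hgt : -Real.pi < z.arg := z.neg_pi_lt_arg
  have hcos : 0 < Real.cos (z.arg / 2) :=
    Real.cos_pos_of_mem_Ioo ⟨by linarith, by linarith⟩
  refine segmentUnit_of_isStrictlyPositive_realPart_smul
    (u := Complex.exp ((ψ - z.arg / 2 : ℝ) * Complex.I)) ?_ ?_
  · rw [Complex.exp_ofReal_mul_I_re]
    rcases mem_uIcc.mp hψ with h | h <;>
      exact Real.cos_pos_of_mem_Ioo ⟨by linarith, by linarith⟩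
  · have hP' : Complex.exp ((ψ - z.arg / 2 : ℝ) * Complex.I) * Complex.exp (-(ψ * Complex.I)) =
        Complex.exp ((-(z.arg / 2) : ℝ) * Complex.I) := by
      rw [← Complex.exp_add]
      push_cast
      ring_nf
    have hQ' : Complex.exp ((-(z.arg / 2) : ℝ) * Complex.I) * z =
        ‖z‖ * Complex.exp ((z.arg / 2 : ℝ) * Complex.I) := by
      nth_rw 2 [← Complex.norm_mul_exp_arg_mul_I z]
      rw [mul_left_comm, ← Complex.exp_add]
      push_cast
      ring_nf
    rw [smul_smul, hP', smul_add, smul_smul, hQ',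
      coe_realPart_smul_add_smul hP.isSelfAdjoint hQ.isSelfAdjoint, Complex.exp_ofReal_mul_I_re,
      Complex.re_ofReal_mul, Complex.exp_ofReal_mul_I_re, Real.cos_neg]
    exact (hP.smul hcos).add_nonneg (smul_nonneg (by positivity) hQ)

theorem segmentUnit_add_smul (hP : IsStrictlyPositive P) (hQ : 0 ≤ Q)
    (hz : z ∈ Complex.slitPlane) : SegmentUnit (P + z • Q) := by
  simpa using segmentUnit_rotation_add_smul hP hQ hz left_mem_uIcc

theorem imaginaryPart_segmentLog_add_smul (hP : IsStrictlyPositive P) (hQ : 0 ≤ Q)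
    (hz : z ∈ Complex.slitPlane) :
    (ℑ (segmentLog (P + z • Q)) : A) = z.arg • 1 +
      ℑ (segmentLog (Complex.exp (-(z.arg * Complex.I)) • (P + z • Q))) := by
  rw [segmentLog_eq_add_rotation _ z.arg fun ψ hψ => segmentUnit_rotation_add_smul hP hQ hz hψ,
    map_add imaginaryPart, imaginaryPart_smul _ 1]
  simp

theorem imaginaryPart_segmentLog_add_smul_mem_Icc (hP : IsStrictlyPositive P) (hQ : 0 ≤ Q)
    (hz : 0 < z.im) : (ℑ (segmentLog (P + z • Q)) : A) ∈ Icc 0 (z.arg • 1) := by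
  have hz' : z ∈ Complex.slitPlane := .inr hz.ne'
  refine ⟨imaginaryPart_segmentLog_nonneg (segmentUnit_add_smul hP hQ hz') ?_, ?_⟩
  · have him := coe_imaginaryPart_smul_add_smul hP.isSelfAdjoint hQ.isSelfAdjoint 1 z
    simpa [one_smul] using him.ge.trans' (by simpa using smul_nonneg hz.le hQ)
  · rw [imaginaryPart_segmentLog_add_smul hP hQ hz', add_le_iff_nonpos_right]
    refine imaginaryPart_segmentLog_nonpos
      (segmentUnit_rotation_add_smul hP hQ hz' right_mem_uIcc) ?_
    rw [coe_imaginaryPart_rotation_add_smul hP.isSelfAdjoint hQ.isSelfAdjoint, neg_smul,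
      neg_nonpos, Complex.sin_arg]
    exact smul_nonneg (div_nonneg hz.le (norm_nonneg z)) hP.nonneg

theorem imaginaryPart_segmentLog_add_smul_mem_Icc_of_im_neg (hP : IsStrictlyPositive P)
    (hQ : 0 ≤ Q) (hz : z.im < 0) :
    (ℑ (segmentLog (P + z • Q)) : A) ∈ Icc (z.arg • 1) 0 := by
  have hz' : z ∈ Complex.slitPlane := .inr hz.ne
  refine ⟨?_, imaginaryPart_segmentLog_nonpos (segmentUnit_add_smul hP hQ hz') ?_⟩
  · rw [imaginaryPart_segmentLog_add_smul hP hQ hz', le_add_iff_nonneg_right]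
    refine imaginaryPart_segmentLog_nonneg
      (segmentUnit_rotation_add_smul hP hQ hz' right_mem_uIcc) ?_
    rw [coe_imaginaryPart_rotation_add_smul hP.isSelfAdjoint hQ.isSelfAdjoint, Complex.sin_arg]
    exact smul_nonneg (neg_nonneg.mpr (div_nonpos_of_nonpos_of_nonneg hz.le (norm_nonneg z)))
      hP.nonneg
  · have him := coe_imaginaryPart_smul_add_smul hP.isSelfAdjoint hQ.isSelfAdjoint 1 z
    simpa [one_smul] using him.le.trans (by simpa using smul_nonpos_of_nonpos_of_nonneg hz.le hQ)

end Pencil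

theorem one_add_mul_sub_one_pos {s x : ℝ} (hs : s ∈ Icc 0 1) (hx : 0 < x) :
    0 < 1 + s * (x - 1) := by
  nlinarith [hs.1, hs.2, mul_nonneg hs.1 hx.le]

theorem integral_sub_one_mul_inv_segment {x : ℝ} (hx : 0 < x) :
    ∫ s in (0 : ℝ)..1, (x - 1) * (1 + s * (x - 1))⁻¹ = Real.log x := by
  have hpos : ∀ s ∈ uIcc (0 : ℝ) 1, 1 + s * (x - 1) ≠ 0 := fun s hs =>
    (one_add_mul_sub_one_pos (uIcc_of_le (zero_le_one' ℝ) ▸ hs) hx).ne'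
  have hderiv : ∀ s ∈ uIcc (0 : ℝ) 1,
      HasDerivAt (fun s => Real.log (1 + s * (x - 1))) ((x - 1) * (1 + s * (x - 1))⁻¹) s := by
    intro s hs
    simpa [div_eq_mul_inv] using
      (((hasDerivAt_id s).mul_const (x - 1)).const_add 1).log (hpos s hs)
  rw [intervalIntegral.integral_eq_sub_of_hasDerivAt hderiv]
  · simp
  · exact (continuousOn_const.mul (ContinuousOn.inv₀ (by fun_prop) hpos)).intervalIntegrable

theorem cfc_sub_one_mul_inv_segment {a : A} (ha : IsStrictlyPositive a) {s : ℝ}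
    (hs : s ∈ Icc 0 1) :
    cfc (fun x : ℝ => (x - 1) * (1 + s * (x - 1))⁻¹) a = (a - 1) * (1 + s • (a - 1))⁻¹ʳ := by
  have hpos : ∀ x ∈ spectrum ℝ a, 1 + s * (x - 1) ≠ 0 := fun x hx =>
    (one_add_mul_sub_one_pos hs (ha.spectrum_pos hx)).ne'
  have hsub : cfc (fun x : ℝ => x - 1) a = a - 1 := by
    rw [cfc_sub .., cfc_id' ℝ a, cfc_const_one ℝ a]
  have hden : cfc (fun x : ℝ => 1 + s * (x - 1)) a = 1 + s • (a - 1) := by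
    rw [cfc_const_add .., cfc_const_mul .., hsub, map_one]
  rw [cfc_mul (fun x => x - 1) (fun x => (1 + s * (x - 1))⁻¹) a (by fun_prop)
    (ContinuousOn.inv₀ (by fun_prop) hpos), hsub, cfc_inv _ a hpos, hden]

theorem segmentLog_eq_cfc_log {a : A} (ha : IsStrictlyPositive a) :
    segmentLog a = cfc Real.log a := by
  have hcont : ContinuousOn (Function.uncurry fun s x : ℝ => (x - 1) * (1 + s * (x - 1))⁻¹)
      (Icc 0 1 ×ˢ spectrum ℝ a) :=
    ContinuousOn.mul (by fun_prop) <| ContinuousOn.inv₀ (by fun_prop) fun p hp =>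
      (one_add_mul_sub_one_pos hp.1 (ha.spectrum_pos hp.2)).ne'
  obtain ⟨B, hB⟩ := (isCompact_Icc.prod (spectrum.isCompact a)).exists_bound_of_continuousOn hcont
  have hlog : (spectrum ℝ a).EqOn
      (fun x => ∫ s in Ioc (0 : ℝ) 1, (x - 1) * (1 + s * (x - 1))⁻¹) Real.log := fun x hx => by
    rw [← integral_sub_one_mul_inv_segment (ha.spectrum_pos hx),
      intervalIntegral.integral_of_le zero_le_one]
  rw [← cfc_congr hlog, cfc_setIntegral measurableSet_Ioc _ (fun _ => B) a
    (hcont.mono (prod_mono_left Ioc_subset_Icc_self)), segmentLog,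
    intervalIntegral.integral_of_le zero_le_one]
  · exact MeasureTheory.setIntegral_congr_fun measurableSet_Ioc fun s hs =>
      (cfc_sub_one_mul_inv_segment ha (Ioc_subset_Icc_self hs)).symm
  · exact (MeasureTheory.ae_restrict_mem measurableSet_Ioc).mono fun s hs x hx =>
      hB (s, x) ⟨Ioc_subset_Icc_self hs, hx⟩
  · exact MeasureTheory.hasFiniteIntegral_const B

end ImaginaryPart

section HalfPlane
open Set Filter Topology
open scoped ComplexConjugate

/-- The Cayley transform of the upper half-plane onto the unit disc taking `w` to `0`. -/
noncomputable def halfPlaneCayley (w z : ℂ) : ℂ := (z - w) / (z - conj w)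

/-- The inverse of the Cayley transform `halfPlaneCayley w`. -/
noncomputable def halfPlaneCayleySymm (w ζ : ℂ) : ℂ := (w - conj w * ζ) / (1 - ζ)

theorem normSq_sub_conj (a b : ℂ) :
    Complex.normSq (a - conj b) = Complex.normSq (a - b) + 4 * (a.im * b.im) := by
  simp [Complex.normSq_apply]; ring

theorem sub_conj_ne_zero {a b : ℂ} (ha : 0 < a.im) (hb : 0 < b.im) : a - conj b ≠ 0 := by
  intro h
  have : a.im + b.im = 0 := by simpa using congrArg Complex.im h
  linarith

theorem one_sub_ne_zero_of_norm_lt_one {ζ : ℂ} (hζ : ‖ζ‖ < 1) : 1 - ζ ≠ 0 := by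
  rw [sub_ne_zero]
  rintro rfl
  simp at hζ

theorem norm_halfPlaneCayley_lt_one {w z : ℂ} (hw : 0 < w.im) (hz : 0 < z.im) :
    ‖halfPlaneCayley w z‖ < 1 := by
  rw [halfPlaneCayley, norm_div, div_lt_one (norm_pos_iff.mpr (sub_conj_ne_zero hz hw)),
    Complex.norm_def, Complex.norm_def, Real.sqrt_lt_sqrt_iff (Complex.normSq_nonneg _),
    normSq_sub_conj]
  linarith [mul_pos hz hw]

theorem im_halfPlaneCayleySymm_pos {w ζ : ℂ} (hw : 0 < w.im) (hζ : ‖ζ‖ < 1) :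
    0 < (halfPlaneCayleySymm w ζ).im := by
  have hζ' : Complex.normSq ζ < 1 := by
    rw [Complex.normSq_eq_norm_sq]
    exact pow_lt_one₀ (norm_nonneg ζ) hζ two_ne_zero
  have him : (halfPlaneCayleySymm w ζ).im =
      w.im * (1 - Complex.normSq ζ) / Complex.normSq (1 - ζ) := by
    rw [halfPlaneCayleySymm, Complex.div_im, ← sub_div]
    congr 1
    simp [Complex.normSq_apply]; ring
  rw [him]
  exact div_pos (mul_pos hw (sub_pos.mpr hζ'))
    (Complex.normSq_pos.mpr (one_sub_ne_zero_of_norm_lt_one hζ))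

theorem halfPlaneCayleySymm_halfPlaneCayley {w z : ℂ} (hw : 0 < w.im) (hz : 0 < z.im) :
    halfPlaneCayleySymm w (halfPlaneCayley w z) = z := by
  have h₁ := one_sub_ne_zero_of_norm_lt_one (norm_halfPlaneCayley_lt_one hw hz)
  have hzw := sub_conj_ne_zero hz hw
  rw [halfPlaneCayleySymm, div_eq_iff h₁, halfPlaneCayley]
  field_simp
  ring

variable {h : ℂ → ℂ} {z w : ℂ}

theorem norm_halfPlaneCayley_map_le (hd : DifferentiableOn ℂ h {z | 0 < z.im})
    (hm : MapsTo h {z | 0 < z.im} {z | 0 < z.im}) (hw : 0 < w.im) (hz : 0 < z.im) :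
    ‖halfPlaneCayley (h w) (h z)‖ ≤ ‖halfPlaneCayley w z‖ := by
  set g : ℂ → ℂ := fun ζ => halfPlaneCayley (h w) (h (halfPlaneCayleySymm w ζ)) with hg
  have hsymm : MapsTo (halfPlaneCayleySymm w) (Metric.ball 0 1) {z | 0 < z.im} := fun ζ hζ =>
    im_halfPlaneCayleySymm_pos hw (mem_ball_zero_iff.mp hζ)
  have hsymm_diff : DifferentiableOn ℂ (halfPlaneCayleySymm w) (Metric.ball 0 1) :=
    DifferentiableOn.div (by fun_prop) (by fun_prop) fun ζ hζ =>
      one_sub_ne_zero_of_norm_lt_one (mem_ball_zero_iff.mp hζ)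
  have hcomp := hd.comp hsymm_diff hsymm
  have hg_diff : DifferentiableOn ℂ g (Metric.ball 0 1) :=
    (hcomp.sub_const _).div (hcomp.sub_const _) fun ζ hζ =>
      sub_conj_ne_zero (hm (hsymm hζ)) (hm hw)
  have hg_maps : MapsTo g (Metric.ball 0 1) (Metric.closedBall 0 1) := fun ζ hζ =>
    mem_closedBall_zero_iff.mpr (norm_halfPlaneCayley_lt_one (hm hw) (hm (hsymm hζ))).le
  have hg_zero : g 0 = 0 := by simp [hg, halfPlaneCayley, halfPlaneCayleySymm]
  simpa [hg, halfPlaneCayleySymm_halfPlaneCayley hw hz] using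
    Complex.norm_le_norm_of_mapsTo_ball hg_diff hg_maps hg_zero (norm_halfPlaneCayley_lt_one hw hz)

theorem normSq_map_sub_mul_le_of_mapsTo (hd : DifferentiableOn ℂ h {z | 0 < z.im})
    (hm : MapsTo h {z | 0 < z.im} {z | 0 < z.im}) (hw : 0 < w.im) (hz : 0 < z.im) :
    Complex.normSq (h z - h w) * (z.im * w.im) ≤
      (h z).im * (h w).im * Complex.normSq (z - w) := by
  have hpick := norm_halfPlaneCayley_map_le hd hm hw hz
  rw [halfPlaneCayley, halfPlaneCayley, ← sq_le_sq₀ (norm_nonneg _) (norm_nonneg _),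
    ← Complex.normSq_eq_norm_sq, ← Complex.normSq_eq_norm_sq, map_div₀, map_div₀,
    div_le_div_iff₀ (Complex.normSq_pos.mpr (sub_conj_ne_zero (hm hz) (hm hw)))
      (Complex.normSq_pos.mpr (sub_conj_ne_zero hz hw)),
    normSq_sub_conj, normSq_sub_conj] at hpick
  linarith

theorem normSq_map_sub_mul_le (hd : DifferentiableOn ℂ h {z | 0 < z.im})
    (hm : ∀ z : ℂ, 0 < z.im → 0 ≤ (h z).im) (hw : 0 < w.im) (hz : 0 < z.im) :
    Complex.normSq (h z - h w) * (z.im * w.im) ≤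
      (h z).im * (h w).im * Complex.normSq (z - w) := by
  have hpos : ∀ τ : ℝ, 0 < τ → Complex.normSq (h z - h w) * (z.im * w.im) ≤
      ((h z).im + τ) * ((h w).im + τ) * Complex.normSq (z - w) := fun τ hτ => by
    simpa using normSq_map_sub_mul_le_of_mapsTo (h := fun z => h z + τ * Complex.I)
      (hd.add_const _) (fun z hz => by simpa using add_pos_of_nonneg_of_pos (hm z hz) hτ) hw hz
  have hcont : Continuous fun τ : ℝ =>
    ((h z).im + τ) * ((h w).im + τ) * Complex.normSq (z - w) := by fun_prop
  have hlim := (hcont.tendsto 0).mono_left (nhdsWithin_le_nhds (s := Ioi 0))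
  simp only [add_zero] at hlim
  exact ge_of_tendsto hlim (eventually_nhdsWithin_of_forall hpos)

-- Julia's lemma: Schwarz–Pick against the point `ε * I`, multiplied by `ε`, as `ε → 0`.
theorem mul_im_le_im_mul_normSq (hd : DifferentiableOn ℂ h {z | 0 < z.im})
    (hm : ∀ z : ℂ, 0 < z.im → 0 ≤ (h z).im) {c : ℝ}
    (hc : Tendsto (fun ε : ℝ => ε * h (ε * Complex.I)) (𝓝[>] 0) (𝓝 (c * Complex.I)))
    (hz : 0 < z.im) : c * z.im ≤ (h z).im * Complex.normSq z := by
  have hpick : ∀ ε : ℝ, 0 < ε →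
      Complex.normSq (ε * h z - ε * h (ε * Complex.I)) * z.im ≤
        (h z).im * (ε * h (ε * Complex.I)).im * Complex.normSq (z - ε * Complex.I) := by
    intro ε hε
    have hw : 0 < ((ε : ℂ) * Complex.I).im := by simpa using hε
    have hwz := mul_le_mul_of_nonneg_left (normSq_map_sub_mul_le hd hm hw hz) hε.le
    rw [← mul_sub, Complex.normSq_mul, Complex.normSq_ofReal, Complex.im_ofReal_mul]
    simp only [Complex.im_ofReal_mul, Complex.I_im, mul_one] at hwz
    linarith
  have hε : Tendsto (fun ε : ℝ => (ε : ℂ)) (𝓝[>] 0) (𝓝 0) :=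
    (Complex.continuous_ofReal.tendsto' 0 0 Complex.ofReal_zero).mono_left nhdsWithin_le_nhds
  have hlim := le_of_tendsto_of_tendsto
    (((Complex.continuous_normSq.tendsto _).comp ((hε.mul_const (h z)).sub hc)).mul_const z.im)
    ((((Complex.continuous_im.tendsto _).comp hc).const_mul (h z).im).mul
      ((Complex.continuous_normSq.tendsto _).comp (hε.mul_const Complex.I |>.const_sub z)))
    (eventually_nhdsWithin_of_forall hpick)
  have hle : c * (c * z.im) ≤ c * ((h z).im * Complex.normSq z) := by
    simp only [zero_mul, zero_sub, Complex.normSq_neg, Complex.normSq_mul, Complex.normSq_ofReal,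
      Complex.normSq_I, mul_one, sub_zero, Complex.im_ofReal_mul, Complex.I_im] at hlim
    linarith
  rcases le_or_gt c 0 with hc₀ | hc₀
  · exact (mul_nonpos_of_nonpos_of_nonneg hc₀ hz.le).trans
      (mul_nonneg (hm z hz) (Complex.normSq_nonneg z))
  · exact le_of_mul_le_mul_left hle hc₀

-- `-F z / z` is a Pick function, and Julia's lemma identifies its pole at `0`.
theorem im_sub_div_nonpos {F : ℂ → ℂ} (hd : DifferentiableOn ℂ F {z | 0 < z.im})
    (hF : ∀ z : ℂ, 0 < z.im → (F z / z).im ≤ 0) (hc : ContinuousAt F 0) (hF₀ : (F 0).im = 0)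
    (hz : 0 < z.im) : ((F z - F 0) / z).im ≤ 0 := by
  have hne : ∀ z : ℂ, 0 < z.im → z ≠ 0 := by
    rintro z hz rfl
    exact hz.false
  have hreal : F 0 = (F 0).re := Complex.ext rfl hF₀
  have hlim : Tendsto (fun ε : ℝ => (ε : ℂ) * -(F (ε * Complex.I) / (ε * Complex.I)))
      (𝓝[>] 0) (𝓝 ((F 0).re * Complex.I)) := by
    have hpath : Tendsto (fun ε : ℝ => ε * Complex.I) (𝓝[>] 0) (𝓝 0) :=
      ((by fun_prop : Continuous fun ε : ℝ => ε * Complex.I).tendsto' 0 _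
        (by simp)).mono_left nhdsWithin_le_nhds
    rw [← hreal]
    refine ((hc.tendsto.comp hpath).mul_const Complex.I).congr' ?_
    filter_upwards [self_mem_nhdsWithin] with ε hε
    have : (ε : ℂ) ≠ 0 := by exact_mod_cast (mem_Ioi.mp hε).ne'
    simp only [Function.comp_apply]
    field_simp
    rw [Complex.I_sq]
    ring
  have hjulia := mul_im_le_im_mul_normSq (h := fun z => -(F z / z))
    (hd.div differentiableOn_id hne).neg (fun z hz => by simpa using hF z hz) hlim hz
  rw [sub_div, Complex.sub_im, hreal, Complex.div_im (Complex.ofReal _)]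
  simp only [Complex.neg_im, Complex.ofReal_im, Complex.ofReal_re, zero_mul, zero_div,
    zero_sub] at hjulia ⊢
  rw [← div_le_iff₀ (Complex.normSq_pos.mpr (hne z hz))] at hjulia
  linarith

theorem re_deriv_nonpos_of_im_nonpos {G : ℂ → ℂ} {G' : ℂ} {x : ℝ} (hG : HasDerivAt G G' x)
    (hx : (G x).im = 0) (him : ∀ z : ℂ, 0 < z.im → (G z).im ≤ 0) : G'.re ≤ 0 := by
  have hpath : HasDerivAt (fun t : ℝ => (x : ℂ) + t * Complex.I) Complex.I 0 := by
    simpa using ((Complex.ofRealCLM.hasDerivAt (x := 0)).mul_const Complex.I).const_add (x : ℂ)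
  have hcomp : HasDerivAt (fun t : ℝ => G (x + t * Complex.I)) (Complex.I * G') 0 :=
    HasDerivAt.scomp (0 : ℝ) (by simpa using hG) hpath
  have himag : HasDerivAt (fun t : ℝ => (G (x + t * Complex.I)).im) G'.re 0 := by
    simpa [Function.comp_def] using Complex.imCLM.hasFDerivAt.comp_hasDerivAt (0 : ℝ) hcomp
  refine le_of_tendsto ((hasDerivWithinAt_iff_tendsto_slope' self_notMem_Ioi).mp
    himag.hasDerivWithinAt) (eventually_nhdsWithin_of_forall fun t ht => ?_)
  have ht' : 0 < t := ht
  rw [slope_def_field]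
  refine div_nonpos_of_nonpos_of_nonneg ?_ (by linarith)
  simpa [hx] using him (x + t * Complex.I) (by simpa using ht')

theorem concaveOn_of_im_slope_nonpos {s : Set ℝ} {F : ℂ → ℂ} {f : ℝ → ℝ} (hs : Convex ℝ s)
    (hFf : ∀ x ∈ s, F x = f x) (hd : ∀ x ∈ s, DifferentiableAt ℂ F x)
    (him : ∀ x ∈ s, ∀ z : ℂ, 0 < z.im → ((F z - F x) / (z - x)).im ≤ 0) : ConcaveOn ℝ s f := by
  refine concaveOn_of_slope_anti_adjacent hs fun {x y z} hx hz hxy hyz => ?_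
  have hsub : Icc y z ⊆ s := fun t ht =>
    hs.ordConnected.out hx hz ⟨hxy.le.trans ht.1, ht.2⟩
  have hreal : ∀ t ∈ s, (F t - F x) / (t - x) = ((f t - f x) / (t - x) : ℝ) := by
    intro t ht
    rw [hFf t ht, hFf x hx]
    push_cast
    rfl
  have hderiv : ∀ t ∈ Icc y z, HasDerivAt (fun w : ℂ => (F w - F x) / (w - x))
      (deriv (fun w : ℂ => (F w - F x) / (w - x)) t) t := by
    intro t ht
    refine (((hd t (hsub ht)).sub_const _).div (differentiableAt_id.sub_const _)
      (sub_ne_zero.mpr ?_)).hasDerivAt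
    exact Complex.ofReal_injective.ne (hxy.trans_le ht.1).ne'
  have hanti : AntitoneOn (fun t : ℝ => ((F t - F x) / (t - x)).re) (Icc y z) := by
    refine antitoneOn_of_hasDerivWithinAt_nonpos (convex_Icc y z)
      (fun t ht => (hderiv t ht).real_of_complex.continuousAt.continuousWithinAt)
      (fun t ht => (hderiv t (interior_subset ht)).real_of_complex.hasDerivWithinAt)
      fun t ht => re_deriv_nonpos_of_im_nonpos (hderiv t (interior_subset ht)) ?_ (him x hx)
    rw [hreal t (hsub (interior_subset ht)), Complex.ofReal_im]
  have hslope := hanti (left_mem_Icc.mpr hyz.le) (right_mem_Icc.mpr hyz.le) hyz.le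
  simp only [hreal y (hsub (left_mem_Icc.mpr hyz.le)), hreal z hz, Complex.ofReal_re] at hslope
  rw [div_le_div_iff₀ (by linarith) (by linarith)] at hslope ⊢
  linarith

end HalfPlane

section TraceExp
open Set ComplexStarModule
open scoped Nat Matrix.Norms.L2Operator MatrixOrder ComplexOrder

variable {n : Type*} [Fintype n]

theorem ofReal_re_trace {A : Matrix n n ℂ} (hA : A.IsHermitian) : (A.trace.re : ℂ) = A.trace :=
  Complex.conj_eq_iff_re.mp (by rw [← Complex.star_def, ← trace_conjTranspose, hA.eq])

variable [DecidableEq n]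

theorem exp_mulVec_of_mulVec_eq_smul {G : Matrix n n ℂ} {v : n → ℂ} {l : ℂ}
    (h : G *ᵥ v = l • v) : NormedSpace.exp G *ᵥ v = Complex.exp l • v := by
  have hpow : ∀ k : ℕ, (G ^ k) *ᵥ v = l ^ k • v := by
    intro k
    induction k with
    | zero => simp
    | succ k ih => rw [pow_succ, ← mulVec_mulVec, h, mulVec_smul, ih, smul_smul, ← pow_succ']
  have hmatrix := (NormedSpace.exp_series_hasSum_exp' (𝕂 := ℂ) G).map
    ((mulVecBilin ℂ ℂ).flip v) (LinearMap.continuous_of_finiteDimensional _)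
  have hscalar := (NormedSpace.exp_series_hasSum_exp' (𝕂 := ℂ) l).smul_const v
  rw [← Complex.exp_eq_exp_ℂ] at hscalar
  refine hmatrix.unique (hscalar.congr_fun fun k => ?_)
  change ((k !⁻¹ : ℂ) • G ^ k) *ᵥ v = _
  rw [smul_mulVec, hpow, smul_assoc]

theorem spectrum_exp_subset (G : Matrix n n ℂ) :
    spectrum ℂ (NormedSpace.exp G) ⊆ Complex.exp '' spectrum ℂ G := by
  intro μ hμ
  rw [← Matrix.spectrum_toLin', ← Module.End.hasEigenvalue_iff_mem_spectrum] at hμ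
  have hcomm : Commute (toLin' (NormedSpace.exp G)) (toLin' G) := by
    have : Commute (NormedSpace.exp G) G := (Commute.refl G).exp_left
    exact this.map toLinAlgEquiv'
  have hmaps : ∀ x ∈ Module.End.eigenspace (toLin' (NormedSpace.exp G)) μ,
      toLin' G x ∈ Module.End.eigenspace (toLin' (NormedSpace.exp G)) μ :=
    Module.End.mapsTo_genEigenspace_of_comm hcomm μ 1
  have : Nontrivial (Module.End.eigenspace (toLin' (NormedSpace.exp G)) μ) :=
    Submodule.nontrivial_iff_ne_bot.mpr hμ
  obtain ⟨l, hl⟩ := Module.End.exists_eigenvalue ((toLin' G).restrict hmaps)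
  obtain ⟨⟨v, hv⟩, hvl, hv₀⟩ := hl.exists_hasEigenvector
  have hne : v ≠ 0 := fun h => hv₀ (by simpa using h)
  have hG : toLin' G v = l • v := by
    simpa using congrArg Subtype.val (Module.End.mem_eigenspace_iff.mp hvl)
  have hexp : NormedSpace.exp G *ᵥ v = μ • v := by
    simpa using Module.End.mem_eigenspace_iff.mp hv
  rw [exp_mulVec_of_mulVec_eq_smul hG] at hexp
  refine ⟨l, ?_, smul_left_injective ℂ hne hexp⟩
  rw [← Matrix.spectrum_toLin', ← Module.End.hasEigenvalue_iff_mem_spectrum]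
  exact Module.End.hasEigenvalue_of_hasEigenvector ⟨Module.End.mem_eigenspace_iff.mpr hG, hne⟩

theorem im_exp_div_nonpos {l z : ℂ} (hl : l.im ∈ Icc (z.arg - Real.pi) z.arg) :
    (Complex.exp l / z).im ≤ 0 := by
  have hdiv : Complex.exp l / z = (‖z‖⁻¹ : ℝ) * Complex.exp (l - z.arg * Complex.I) := by
    nth_rw 1 [← Complex.norm_mul_exp_arg_mul_I z]
    rw [Complex.exp_sub, mul_comm (‖z‖ : ℂ), ← div_div, div_eq_inv_mul _ (‖z‖ : ℂ),
      Complex.ofReal_inv]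
  have hsin : Real.sin (l.im - z.arg) ≤ 0 :=
    Real.sin_nonpos_of_nonpos_of_neg_pi_le (by linarith [hl.2]) (by linarith [hl.1])
  rw [hdiv, Complex.im_ofReal_mul, Complex.exp_im]
  refine mul_nonpos_of_nonneg_of_nonpos (by positivity)
    (mul_nonpos_of_nonneg_of_nonpos (Real.exp_pos _).le ?_)
  simpa using hsin

theorem im_trace_exp_div_nonpos {G : Matrix n n ℂ} {z : ℂ}
    (hG : (ℑ G : Matrix n n ℂ) ∈ Icc ((z.arg - Real.pi) • 1) (z.arg • 1)) :
    ((NormedSpace.exp G).trace / z).im ≤ 0 := by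
  let imDiv : ℂ →+ ℝ := Complex.imAddGroupHom.comp (AddMonoidHom.mulRight z⁻¹)
  have himDiv : ∀ μ, imDiv μ = (μ / z).im := fun μ => by simp [imDiv, div_eq_mul_inv]
  rw [← himDiv, trace_eq_sum_roots_charpoly, map_multiset_sum]
  refine Multiset.sum_induction (· ≤ 0) _ (fun _ _ => add_nonpos) le_rfl fun x hx => ?_
  obtain ⟨μ, hμ, rfl⟩ := Multiset.mem_map.mp hx
  obtain ⟨l, hl, rfl⟩ := spectrum_exp_subset G
    (mem_spectrum_of_isRoot_charpoly (Polynomial.isRoot_of_mem_roots hμ))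
  rw [himDiv]
  exact im_exp_div_nonpos ⟨le_im_of_mem_spectrum hG.1 hl, im_le_of_mem_spectrum hG.2 hl⟩

section CStarAlgebra
variable {A : Type*} [CStarAlgebra A] [PartialOrder A] [StarOrderedRing A]

theorem imaginaryPart_add_segmentLog_add_segmentLog_mem_Icc {L P₁ P₂ Q₁ Q₂ : A}
    (hL : IsSelfAdjoint L) (hP₁ : IsStrictlyPositive P₁) (hP₂ : IsStrictlyPositive P₂)
    (hQ₁ : 0 ≤ Q₁) (hQ₂ : 0 ≤ Q₂) {z : ℂ} (hz : 0 < z.im) :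
    (ℑ (L + segmentLog (P₁ + z • Q₁) + segmentLog (P₂ - z • Q₂)) : A) ∈
      Icc ((z.arg - Real.pi) • 1) (z.arg • 1) := by
  have h₁ := imaginaryPart_segmentLog_add_smul_mem_Icc hP₁ hQ₁ hz
  have h₂ := imaginaryPart_segmentLog_add_smul_mem_Icc_of_im_neg hP₂ hQ₂ (z := -z) (by simpa)
  rw [Complex.arg_neg_eq_arg_sub_pi_of_im_pos hz, neg_smul, ← sub_eq_add_neg] at h₂
  rw [map_add, map_add, hL.imaginaryPart, zero_add]
  exact ⟨(zero_add _).ge.trans (add_le_add h₁.1 h₂.1), (add_le_add h₁.2 h₂.2).trans_eq (add_zero _)⟩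

end CStarAlgebra

/-- The holomorphic extension `z ↦ tr exp (L + log (C₁ + z K₁) + log (C₂ - z K₂))` of the function
in Lieb's theorem, built from the entire exponential and `segmentLog`. -/
noncomputable def traceExpLog (L C₁ C₂ K₁ K₂ : Matrix n n ℂ) (z : ℂ) : ℂ :=
  (NormedSpace.exp (L + segmentLog (C₁ + z • K₁) + segmentLog (C₂ - z • K₂))).trace

variable {L C₁ C₂ K₁ K₂ : Matrix n n ℂ}

theorem differentiableAt_traceExpLog {z : ℂ} (h₁ : SegmentUnit (C₁ + z • K₁))
    (h₂ : SegmentUnit (C₂ - z • K₂)) : DifferentiableAt ℂ (traceExpLog L C₁ C₂ K₁ K₂) z := by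
  have hexp := fun G : Matrix n n ℂ => (NormedSpace.exp_analytic (𝕂 := ℂ) G).differentiableAt
  have hlog₁ := (hasFDerivAt_segmentLog h₁).differentiableAt.comp (f := fun w : ℂ => C₁ + w • K₁) z
    (by fun_prop)
  have hlog₂ := (hasFDerivAt_segmentLog h₂).differentiableAt.comp (f := fun w : ℂ => C₂ - w • K₂) z
    (by fun_prop)
  exact (LinearMap.toContinuousLinearMap (traceLinearMap n ℂ ℂ)).differentiableAt.comp z
    ((hexp _).comp z ((hlog₁.const_add L).add hlog₂))

theorem traceExpLog_sub_translate (L C₁ C₂ K₁ K₂ : Matrix n n ℂ) (w z : ℂ) :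
    traceExpLog L (C₁ + w • K₁) (C₂ - w • K₂) K₁ K₂ (z - w) = traceExpLog L C₁ C₂ K₁ K₂ z := by
  have h₁ : C₁ + w • K₁ + (z - w) • K₁ = C₁ + z • K₁ := by module
  have h₂ : C₂ - w • K₂ - (z - w) • K₂ = C₂ - z • K₂ := by module
  rw [traceExpLog, h₁, h₂, traceExpLog]

theorem traceExpLog_ofReal {x : ℝ} (hL : L.IsHermitian) (h₁ : (C₁ + x • K₁).PosDef)
    (h₂ : (C₂ - x • K₂).PosDef) :
    traceExpLog L C₁ C₂ K₁ K₂ x =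
      (cfc Real.exp (L + cfc Real.log (C₁ + x • K₁) + cfc Real.log (C₂ - x • K₂))).trace.re := by
  have hself : IsSelfAdjoint
      (L + cfc Real.log (C₁ + x • K₁) + cfc Real.log (C₂ - x • K₂)) :=
    (hL.isSelfAdjoint.add (cfc_predicate _ _)).add (cfc_predicate _ _)
  rw [ofReal_re_trace (isHermitian_iff_isSelfAdjoint.mpr (cfc_predicate _ _)),
    CFC.real_exp_eq_normedSpace_exp hself, traceExpLog, Complex.coe_smul, Complex.coe_smul,
    segmentLog_eq_cfc_log h₁.isStrictlyPositive, segmentLog_eq_cfc_log h₂.isStrictlyPositive]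

theorem differentiableOn_traceExpLog (hC₁ : C₁.PosDef) (hC₂ : C₂.PosDef) (hK₁ : K₁.PosSemidef)
    (hK₂ : K₂.PosSemidef) : DifferentiableOn ℂ (traceExpLog L C₁ C₂ K₁ K₂) {z | 0 < z.im} := by
  intro z (hz : 0 < z.im)
  have hz' : -z ∈ Complex.slitPlane := .inr (by simpa using hz.ne')
  refine (differentiableAt_traceExpLog
    (segmentUnit_add_smul hC₁.isStrictlyPositive hK₁.nonneg (.inr hz.ne'))
    ?_).differentiableWithinAt
  simpa [sub_eq_add_neg] using segmentUnit_add_smul hC₂.isStrictlyPositive hK₂.nonneg hz'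

theorem im_traceExpLog_sub_div_nonpos (hL : L.IsHermitian) (hC₁ : C₁.PosDef) (hC₂ : C₂.PosDef)
    (hK₁ : K₁.PosSemidef) (hK₂ : K₂.PosSemidef) {z : ℂ} (hz : 0 < z.im) :
    ((traceExpLog L C₁ C₂ K₁ K₂ z - traceExpLog L C₁ C₂ K₁ K₂ 0) / z).im ≤ 0 := by
  refine im_sub_div_nonpos (differentiableOn_traceExpLog hC₁ hC₂ hK₁ hK₂) (fun z hz => ?_)
    ?_ ?_ hz
  · exact im_trace_exp_div_nonpos <| imaginaryPart_add_segmentLog_add_segmentLog_mem_Icc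
      hL.isSelfAdjoint hC₁.isStrictlyPositive hC₂.isStrictlyPositive hK₁.nonneg hK₂.nonneg hz
  · exact (differentiableAt_traceExpLog
      (by simpa using segmentUnit_of_isStrictlyPositive hC₁.isStrictlyPositive)
      (by simpa using segmentUnit_of_isStrictlyPositive hC₂.isStrictlyPositive)).continuousAt
  · rw [← Complex.ofReal_zero, traceExpLog_ofReal hL (by simpa) (by simpa), Complex.ofReal_im]

theorem concaveOn_re_trace_exp_log {s : Set ℝ} (hs : Convex ℝ s) (hL : L.IsHermitian)
    (hC₁ : ∀ x ∈ s, (C₁ + x • K₁).PosDef) (hC₂ : ∀ x ∈ s, (C₂ - x • K₂).PosDef)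
    (hK₁ : K₁.PosSemidef) (hK₂ : K₂.PosSemidef) :
    ConcaveOn ℝ s fun x => (cfc Real.exp
      (L + cfc Real.log (C₁ + x • K₁) + cfc Real.log (C₂ - x • K₂))).trace.re := by
  refine concaveOn_of_im_slope_nonpos (F := traceExpLog L C₁ C₂ K₁ K₂) hs
    (fun x hx => traceExpLog_ofReal hL (hC₁ x hx) (hC₂ x hx)) (fun x hx => ?_)
    (fun x hx z hz => ?_)
  · refine differentiableAt_traceExpLog ?_ ?_ <;> rw [Complex.coe_smul]
    · exact segmentUnit_of_isStrictlyPositive (hC₁ x hx).isStrictlyPositive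
    · exact segmentUnit_of_isStrictlyPositive (hC₂ x hx).isStrictlyPositive
  · have htranslate := traceExpLog_sub_translate L C₁ C₂ K₁ K₂ x
    rw [← htranslate z, ← htranslate x, sub_self, Complex.coe_smul, Complex.coe_smul]
    exact im_traceExpLog_sub_div_nonpos hL (hC₁ x hx) (hC₂ x hx) hK₁ hK₂ (by simpa using hz)

end TraceExp

section Complexification
open Filter Topology
open scoped MatrixOrder ComplexOrder

variable {𝕜 n : Type*} [RCLike 𝕜]

theorem eventually_posDef_add_smul [Finite n] {C Q : Matrix n n 𝕜} (hC : C.PosDef)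
    (hQ : Q.IsHermitian) : ∀ᶠ x in 𝓝 (0 : ℝ), (C + x • Q).PosDef := by
  classical
  cases nonempty_fintype n
  have hsphere : ∀ᶠ x in 𝓝 (0 : ℝ), ∀ v ∈ Metric.sphere (0 : EuclideanSpace 𝕜 n) 1,
      0 < RCLike.re (star ⇑v ⬝ᵥ (C + x • Q) *ᵥ ⇑v) := by
    refine (isCompact_sphere _ _).eventually_forall_of_forall_eventually fun v hv => ?_
    have hcont : Continuous fun p : ℝ × EuclideanSpace 𝕜 n =>
        RCLike.re (star ⇑p.2 ⬝ᵥ (C + p.1 • Q) *ᵥ ⇑p.2) := by fun_prop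
    refine hcont.continuousAt.eventually (lt_mem_nhds ?_)
    have hv₀ : ⇑v ≠ 0 := fun h => ne_zero_of_mem_unit_sphere ⟨v, hv⟩ (PiLp.ext (congrFun h))
    simpa using hC.re_dotProduct_pos hv₀
  filter_upwards [hsphere] with x hx
  have hherm : (C + x • Q).IsHermitian := hC.isHermitian.add (hQ.smul (.all x))
  refine hherm.posDef_iff_eigenvalues_pos.mpr fun i => ?_
  rw [hherm.eigenvalues_eq]
  exact hx _ (by simp)

theorem exists_forall_mem_Ioo_posDef [Finite n] {C₁ C₂ K₁ K₂ : Matrix n n 𝕜} (hC₁ : C₁.PosDef)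
    (hC₂ : C₂.PosDef) (hK₁ : K₁.IsHermitian) (hK₂ : K₂.IsHermitian) :
    ∃ η > (0 : ℝ), ∀ x ∈ Set.Ioo (-η) η, (C₁ + x • K₁).PosDef ∧ (C₂ - x • K₂).PosDef := by
  have hevent := (eventually_posDef_add_smul hC₁ hK₁).and
    (eventually_posDef_add_smul hC₂ hK₂.neg)
  obtain ⟨η, hη, hball⟩ := Metric.eventually_nhds_iff_ball.mp hevent
  refine ⟨η, hη, fun x hx => ?_⟩
  simpa [sub_eq_add_neg] using hball x (by simpa [Real.ball_eq_Ioo] using hx)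

variable [Fintype n] [DecidableEq n]

variable (𝕜 n) in
/-- Extension of scalars to `ℂ`, entrywise, for matrices over `𝕜 = ℝ` or `𝕜 = ℂ`. -/
noncomputable def complexifyMatrix : Matrix n n 𝕜 →⋆ₐ[ℝ] Matrix n n ℂ where
  toAlgHom := (AlgHom.ofLinearMap (RCLike.map 𝕜 ℂ : 𝕜 →ₗ[ℝ] ℂ) (by simp) fun a b =>
    Complex.ext (by simp) (by simp [add_comm])).mapMatrix
  map_star' A := by ext; simp

variable {A : Matrix n n 𝕜}

theorem posSemidef_complexifyMatrix (hA : A.PosSemidef) : (complexifyMatrix 𝕜 n A).PosSemidef :=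
  nonneg_iff_posSemidef.mp (map_nonneg _ hA.nonneg)

theorem posDef_complexifyMatrix (hA : A.PosDef) : (complexifyMatrix 𝕜 n A).PosDef :=
  (posSemidef_complexifyMatrix hA.posSemidef).posDef_iff_isUnit.mpr (hA.isUnit.map _)

theorem continuous_complexifyMatrix : Continuous (complexifyMatrix 𝕜 n) :=
  (complexifyMatrix 𝕜 n).toLinearMap.continuous_of_finiteDimensional

theorem complexifyMatrix_cfc (f : ℝ → ℝ) (hA : A.IsHermitian) :
    complexifyMatrix 𝕜 n (cfc f A) = cfc f (complexifyMatrix 𝕜 n A) :=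
  StarAlgHomClass.map_cfc (complexifyMatrix 𝕜 n) f A (finite_real_spectrum.continuousOn f)
    continuous_complexifyMatrix hA.isSelfAdjoint (hA.isSelfAdjoint.map _)

theorem re_trace_complexifyMatrix (A : Matrix n n 𝕜) :
    (complexifyMatrix 𝕜 n A).trace.re = RCLike.re A.trace := by
  simp [complexifyMatrix, trace]

theorem lieb_concavity_generalization_general {L C₁ C₂ K₁ K₂ : Matrix n n 𝕜} {s : Set ℝ}
    (hs : Convex ℝ s) (hL : L.IsHermitian) (hC₁ : ∀ x ∈ s, (C₁ + x • K₁).PosDef)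
    (hC₂ : ∀ x ∈ s, (C₂ - x • K₂).PosDef) (hK₁ : K₁.PosSemidef) (hK₂ : K₂.PosSemidef) :
    ConcaveOn ℝ s fun x => RCLike.re (cfc Real.exp
      (L + cfc Real.log (C₁ + x • K₁) + cfc Real.log (C₂ - x • K₂))).trace := by
  let φ := complexifyMatrix 𝕜 n
  have hφ₁ : ∀ x : ℝ, φ (C₁ + x • K₁) = φ C₁ + x • φ K₁ := by simp
  have hφ₂ : ∀ x : ℝ, φ (C₂ - x • K₂) = φ C₂ - x • φ K₂ := by simp
  have hcomplex := concaveOn_re_trace_exp_log (L := φ L) hs (hL.isSelfAdjoint.map φ)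
    (fun x hx => hφ₁ x ▸ posDef_complexifyMatrix (hC₁ x hx))
    (fun x hx => hφ₂ x ▸ posDef_complexifyMatrix (hC₂ x hx))
    (posSemidef_complexifyMatrix hK₁) (posSemidef_complexifyMatrix hK₂)
  refine hcomplex.congr fun x hx => ?_
  have hself : IsSelfAdjoint (L + cfc Real.log (C₁ + x • K₁) + cfc Real.log (C₂ - x • K₂)) :=
    (hL.isSelfAdjoint.add (cfc_predicate _ _)).add (cfc_predicate _ _)
  rw [← re_trace_complexifyMatrix, complexifyMatrix_cfc _ hself, map_add, map_add,
    complexifyMatrix_cfc _ (hC₁ x hx).isHermitian, complexifyMatrix_cfc _ (hC₂ x hx).isHermitian,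
    hφ₁, hφ₂]

end Complexification

theorem matFun_eq_cfc {d : ℕ} (f : ℝ → ℝ) (A : Matrix (Fin d) (Fin d) ℝ) :
    matFun f A = cfc f A := by
  by_cases hA : A.IsHermitian
  · rw [matFun, dif_pos hA, hA.cfc_eq, IsHermitian.cfc, Unitary.conjStarAlgAut_apply]
    rfl
  · rw [matFun, dif_neg hA]
    exact (cfc_apply_of_not_predicate A hA).symm

/-- generalized Lieb concavity: for symmetric `L`, positive definite `C₁, C₂`
and positive semidefinite `K₁, K₂`, the map
`z ↦ tr exp(L + log(C₁ + z K₁) + log(C₂ − z K₂))` is concave on a neighborhood `(−η, η)`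
of `0`. -/
theorem lieb_concavity_generalization {d : ℕ} (L C₁ C₂ K₁ K₂ : Matrix (Fin d) (Fin d) ℝ)
    (hL : L.IsSymm) (hC₁ : C₁.PosDef) (hC₂ : C₂.PosDef)
    (hK₁ : K₁.PosSemidef) (hK₂ : K₂.PosSemidef) :
    ∃ η : ℝ, 0 < η ∧
      ConcaveOn ℝ (Set.Ioo (-η) η)
        (fun z : ℝ =>
          (matExp (L + matLog (C₁ + z • K₁) + matLog (C₂ - z • K₂))).trace) := by
  obtain ⟨η, hη, hpos⟩ := exists_forall_mem_Ioo_posDef hC₁ hC₂ hK₁.isHermitian hK₂.isHermitian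
  refine ⟨η, hη, ?_⟩
  simpa only [matExp, matLog, matFun_eq_cfc, RCLike.re_to_real] using
    lieb_concavity_generalization_general (convex_Ioo _ _) (isHermitian_iff_isSymm.mpr hL)
      (fun x hx => (hpos x hx).1) (fun x hx => (hpos x hx).2) hK₁ hK₂
end
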